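/- Let n ≥ 1, Q = 2n+2, and suppose 1 < p < ∞, 1 < q' < ∞, q is the Hölder conjugate of q' (1/q + 1/q' = 1), p' is the Hölder conjugate of p, 0 < λ < Q, α + β ≥ 0, λ + α + β ≤ Q, β < 2n/p', α < 2n/q, 1/p + 1/q' + (λ+α+β)/Q = 2, and q > p. Let C = sup{ ‖I_λ(g)(u)·|z|^{-α}‖_{L^q(ℍⁿ)} : g ≥ 0, ‖g(v)·|z'|^{β}‖_{L^p(ℍⁿ)} = 1 } (where u=(z,t), v=(z',t')), and let (g_i) be nonnegative with ‖g_i(v)·|z'|^{β}‖_{L^p(ℍⁿ)} = 1, ‖I_λ(g_i)(u)·|z|^{-α}‖_{L^q(ℍⁿ)} → C, and ∫_{B_ℍ(0,1)} |g_i|^p |z'|^{βp} dv = sup_{t∈ℝ} ∫_{B_ℍ((0,t),1)} |g_i|^p |z'|^{βp} dv = 1/2 for all i. Set μ_i = |g_i|^p |z'|^{βp} dv. Then: (i) there exist v_i ∈ ℍⁿ such that for every ε > 0 there is R_ε > 0 with μ_i(B_ℍ(v_i,R_ε)) ≥ 1 − ε for all i; and (ii) any weak-* limit μ of a subsequence of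 (μ_i) satisfies μ(ℍⁿ) = 1. -/

import Mathlib

open MeasureTheory ENNReal Filter

noncomputable section

/-- The Heisenberg group `ℍⁿ = ℂⁿ × ℝ` (as a measure space, with Lebesgue/Haar measure). -/
abbrev Hn (n : ℕ) := (Fin n → ℂ) × ℝ

/-- Euclidean norm of the `ℂⁿ` component. -/
def znorm {n : ℕ} (z : Fin n → ℂ) : ℝ := Real.sqrt (∑ j, Complex.normSq (z j))

/-- Homogeneous norm `|u| = (|z|⁴ + t²)^{1/4}` on the Heisenberg group. -/
def Hnorm {n : ℕ} (u : Hn n) : ℝ := (znorm u.1 ^ 4 + u.2 ^ 2) ^ ((1 : ℝ)/4)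

/-- Heisenberg group law `(z,t)·(z',t') = (z+z', t+t'+2 Im (z ⬝ conj z'))`. -/
def Hmul {n : ℕ} (u v : Hn n) : Hn n :=
  (u.1 + v.1, u.2 + v.2 + 2 * (∑ j, u.1 j * (starRingEnd ℂ) (v.1 j)).im)

/-- Heisenberg group inverse `(z,t)⁻¹ = (-z,-t)`. -/
def Hinv {n : ℕ} (u : Hn n) : Hn n := (-u.1, -u.2)

/-- Left-invariant quasi-distance `d(u,v) = |u⁻¹ v|`. -/
def Hdist {n : ℕ} (u v : Hn n) : ℝ := Hnorm (Hmul (Hinv u) v)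

/-- Heisenberg ball `B_ℍ(u,R)`. -/
def Hball {n : ℕ} (u : Hn n) (R : ℝ) : Set (Hn n) := {v | Hdist u v < R}

/-- Fractional integral operator `I_λ(g)(u) = ∫ g(v)/|u⁻¹v|^λ dv`. -/
def Ilam {n : ℕ} (lam : ℝ) (g : Hn n → ℝ) (u : Hn n) : ℝ :=
  ∫ v, g v / Hdist u v ^ lam

/-- The measure `|g(v)|^p |z'|^{βp} dv` on the Heisenberg group, `v = (z',t')`. -/
def muWDz {n : ℕ} (p β : ℝ) (g : Hn n → ℝ) : Measure (Hn n) :=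
  volume.withDensity (fun v => ENNReal.ofReal (|g v| ^ p * znorm v.1 ^ (β * p)))

/-- The best constant of the Stein–Weiss inequality with horizontal (`|z|`) weights. -/
def SWbestConstHorizontal (n : ℕ) (p q lam α β : ℝ) : ℝ≥0∞ :=
  sSup { c : ℝ≥0∞ | ∃ g : Hn n → ℝ, Measurable g ∧ (∀ v, 0 ≤ g v) ∧
    eLpNorm (fun v => g v * znorm v.1 ^ β) (ENNReal.ofReal p) volume = 1 ∧
    c = eLpNorm (fun u => Ilam lam g u * znorm u.1 ^ (-α)) (ENNReal.ofReal q) volume }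



lemma aux_lint_Ioo_rpow {e S : ℝ} (he : -1 < e) (hS : 0 ≤ S) :
    ∫⁻ b in Set.Ioc (0:ℝ) S, ENNReal.ofReal (b ^ e) = ENNReal.ofReal (S ^ (e + 1) / (e + 1)) := by
  have h1 := (intervalIntegral.intervalIntegrable_rpow' (a := 0) (b := S) he)
  rw [intervalIntegrable_iff_integrableOn_Ioc_of_le hS] at h1
  rw [← ofReal_integral_eq_lintegral_ofReal h1, ← intervalIntegral.integral_of_le hS,
    integral_rpow (Or.inl he), Real.zero_rpow (by linarith), sub_zero]
  filter_upwards [ae_restrict_mem measurableSet_Ioc] with x hx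
  exact Real.rpow_nonneg hx.1.le _

lemma aux_lint_Ioi_rpow {e S : ℝ} (he : e < -1) (hS : 0 < S) :
    ∫⁻ b in Set.Ioi S, ENNReal.ofReal (b ^ e) = ENNReal.ofReal (- S ^ (e + 1) / (e + 1)) := by
  rw [← ofReal_integral_eq_lintegral_ofReal (integrableOn_Ioi_rpow_of_lt he hS),
    integral_Ioi_rpow_of_lt he hS]
  filter_upwards [ae_restrict_mem measurableSet_Ioi] with x hx
  exact Real.rpow_nonneg (hS.le.trans (le_of_lt hx)) _

/-- Kolmogorov's inequality for weak-type functions. -/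
lemma kolmogorov {Y : Type*} [MeasurableSpace Y] (M r : ℝ) (hM : 0 < M) (hr : 1 < r) :
    ∃ C : ℝ, 0 < C ∧ ∀ (ν : Measure Y) (k : Y → ℝ), Measurable k → (∀ y, 0 ≤ k y) →
      (∀ c : ℝ, 0 < c → ν {y | c < k y} ≤ ENNReal.ofReal (M * c ^ (-r))) →
      ∀ B : Set Y, MeasurableSet B →
        ∫⁻ y in B, ENNReal.ofReal (k y) ∂ν ≤ ENNReal.ofReal C * ν B ^ (1 - 1 / r) := by
  refine ⟨M ^ (1 / r) * (r / (r - 1)), by have : 0 < r - 1 := by linarith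
                                          positivity, ?_⟩
  intro ν k hk hk0 hw B hB
  have hr1 : 0 < r - 1 := by linarith
  have hC : 0 < M ^ (1 / r) * (r / (r - 1)) := by positivity
  have hexp : 0 < 1 - 1 / r := by
    rw [sub_pos, div_lt_one (by linarith)]; exact hr
  rcases eq_or_ne (ν B) 0 with h0 | h0
  · rw [Measure.restrict_eq_zero.2 h0]; simp
  rcases eq_or_ne (ν B) ∞ with ht | ht
  · rw [ht, ENNReal.top_rpow_of_pos hexp, ENNReal.mul_top (by simpa using hC)]; exact le_top
  set b := (ν B).toReal with hb
  have hbν : ν B = ENNReal.ofReal b := (ENNReal.ofReal_toReal ht).symm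
  have hb0 : 0 < b := ENNReal.toReal_pos h0 ht
  rw [lintegral_eq_lintegral_meas_lt _ (Eventually.of_forall hk0) hk.aemeasurable]
  set c0 := (M / b) ^ (1 / r) with hc0
  have hc0p : 0 < c0 := by positivity
  rw [← Set.Ioc_union_Ioi_eq_Ioi hc0p.le]
  refine (lintegral_union_le _ _ _).trans ?_
  have h1 : ∫⁻ t in Set.Ioc 0 c0, (ν.restrict B) {a | t < k a} ≤ ENNReal.ofReal (b * c0) := by
    calc _ ≤ ∫⁻ t in Set.Ioc 0 c0, ν B := by
            refine lintegral_mono fun t => ?_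
            exact (measure_mono (Set.subset_univ _)).trans (by simp)
      _ = _ := by simp [hbν, ENNReal.ofReal_mul hb0.le]
  have h2 : ∫⁻ t in Set.Ioi c0, (ν.restrict B) {a | t < k a}
      ≤ ENNReal.ofReal (M * (- c0 ^ (-r + 1) / (-r + 1))) := by
    calc _ ≤ ∫⁻ t in Set.Ioi c0, ENNReal.ofReal M * ENNReal.ofReal (t ^ (-r)) := by
            refine setLIntegral_mono' measurableSet_Ioi fun t ht => ?_
            rw [← ENNReal.ofReal_mul hM.le]
            exact (Measure.restrict_apply_le _ _).trans (hw t (hc0p.trans ht))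
      _ = _ := by
            rw [lintegral_const_mul _ (by fun_prop), aux_lint_Ioi_rpow (by linarith) hc0p,
              ENNReal.ofReal_mul hM.le]
  refine (add_le_add h1 h2).trans (le_of_eq ?_)
  have hneg : -c0 ^ (-r + 1) / (-r + 1) = c0 ^ (-r + 1) / (r - 1) := by
    rw [show -r + 1 = -(r - 1) by ring, neg_div_neg_eq]
  rw [hneg, ← ENNReal.ofReal_add (by positivity) (by positivity), hbν,
    ENNReal.ofReal_rpow_of_pos hb0, ← ENNReal.ofReal_mul hC.le]
  congr 1
  have e1 : c0 ^ (-r + 1) = (b / M) * c0 := by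
    rw [Real.rpow_add hc0p, Real.rpow_one, hc0, ← Real.rpow_mul (by positivity)]
    rw [show 1 / r * -r = -1 by field_simp, Real.rpow_neg_one, inv_div]
  have e2 : b * c0 = M ^ (1 / r) * b ^ (1 - 1 / r) := by
    rw [hc0, Real.div_rpow hM.le hb0.le, Real.rpow_sub hb0, Real.rpow_one]
    field_simp
  rw [e1]
  have : M * (b / M * c0 / (r - 1)) = b * c0 / (r - 1) := by field_simp
  rw [this, show b * c0 + b * c0 / (r - 1) = (b * c0) * (r / (r - 1)) by field_simp; ring, e2]
  ring

lemma E1_gen {Y : Type*} [MeasurableSpace Y] (V D a : ℝ) (hV : 0 < V) (hD : 0 < D) (ha : a < D) :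
    ∃ C : ℝ, 0 < C ∧ ∀ (ν : Measure Y) (N : Y → ℝ), Measurable N → (∀ y, 0 ≤ N y) →
      (∀ ρ : ℝ, 0 < ρ → ν {y | N y < ρ} ≤ ENNReal.ofReal (V * ρ ^ D)) →
      ∀ ρ : ℝ, 0 < ρ → ∫⁻ y in {y | N y < ρ}, ENNReal.ofReal (N y ^ (-a)) ∂ν
        ≤ ENNReal.ofReal (C * ρ ^ (D - a)) := by
  rcases le_or_gt a 0 with h0 | h0
  · refine ⟨V, hV, fun ν N hN hN0 hw ρ hρ => ?_⟩
    have hm : MeasurableSet {y | N y < ρ} := measurableSet_lt hN measurable_const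
    calc _ ≤ ∫⁻ y in {y | N y < ρ}, ENNReal.ofReal (ρ ^ (-a)) ∂ν := by
            refine setLIntegral_mono' hm fun y hy => ?_
            exact ENNReal.ofReal_le_ofReal
              (Real.rpow_le_rpow (hN0 y) (le_of_lt hy) (by linarith))
      _ ≤ _ := by
            rw [setLIntegral_const]
            refine (mul_le_mul_right (hw ρ hρ) _).trans (le_of_eq ?_)
            rw [← ENNReal.ofReal_mul (by positivity), Real.rpow_sub hρ, Real.rpow_neg hρ.le]
            congr 1
            field_simp
  · have hr : 1 < D / a := by rwa [one_lt_div h0]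
    obtain ⟨C, hC, H⟩ := kolmogorov (Y := Y) V (D / a) hV hr
    refine ⟨C * V ^ (1 - 1 / (D / a)), by positivity, fun ν N hN hN0 hw ρ hρ => ?_⟩
    have hm : MeasurableSet {y | N y < ρ} := measurableSet_lt hN measurable_const
    refine (H ν (fun y => N y ^ (-a)) (by fun_prop) (fun y => Real.rpow_nonneg (hN0 y) _) ?_ _ hm).trans ?_
    · intro c hc
      have : V * c ^ (-(D / a)) = V * (c ^ (-(1 / a))) ^ D := by
        rw [← Real.rpow_mul hc.le]; congr 2; field_simp
      rw [this]
      refine (measure_mono ?_).trans (hw _ (by positivity))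
      intro y hy
      simp only [Set.mem_setOf_eq] at hy ⊢
      rcases (hN0 y).eq_or_lt with h | h
      · rw [← h]; positivity
      have := Real.rpow_lt_rpow_of_neg hc hy (show -(1 / a) < 0 by simpa using h0)
      rwa [← Real.rpow_mul h.le, show -a * -(1 / a) = 1 by field_simp, Real.rpow_one] at this
    · have hexp : 0 < 1 - 1 / (D / a) := by
        rw [sub_pos, div_lt_one (by linarith)]; exact hr
      refine (mul_le_mul_right (ENNReal.rpow_le_rpow (hw ρ hρ) hexp.le) _).trans (le_of_eq ?_)
      rw [ENNReal.ofReal_rpow_of_pos (by positivity), ← ENNReal.ofReal_mul hC.le,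
        Real.mul_rpow hV.le (by positivity), ← Real.rpow_mul hρ.le, mul_assoc]
      congr 4
      field_simp

lemma E2_gen {Y : Type*} [MeasurableSpace Y] (V D a : ℝ) (hV : 0 < V) (hD : 0 < D) (ha : D < a) :
    ∃ C : ℝ, 0 < C ∧ ∀ (ν : Measure Y) (N : Y → ℝ), Measurable N → (∀ y, 0 ≤ N y) →
      (∀ ρ : ℝ, 0 < ρ → ν {y | N y < ρ} ≤ ENNReal.ofReal (V * ρ ^ D)) →
      ∀ ρ : ℝ, 0 < ρ → ∫⁻ y in {y | ρ ≤ N y}, ENNReal.ofReal (N y ^ (-a)) ∂ν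
        ≤ ENNReal.ofReal (C * ρ ^ (D - a)) := by
  have h0 : 0 < a := hD.trans ha
  have hDa : D / a < 1 := by rwa [div_lt_one h0]
  refine ⟨V / (1 - D / a), div_pos hV (by linarith), fun ν N hN hN0 hw ρ hρ => ?_⟩
  rw [lintegral_eq_lintegral_meas_lt _ (Eventually.of_forall fun y => Real.rpow_nonneg (hN0 y) _)
    (by fun_prop)]
  have hm : MeasurableSet {y | ρ ≤ N y} := measurableSet_le measurable_const hN
  have hρa : 0 < ρ ^ (-a) := by positivity
  rw [← Set.Ioc_union_Ioi_eq_Ioi hρa.le]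
  refine (lintegral_union_le _ _ _).trans ?_
  have h2 : ∫⁻ t in Set.Ioi (ρ ^ (-a)), (ν.restrict {y | ρ ≤ N y}) {y | t < N y ^ (-a)} = 0 := by
    rw [← nonpos_iff_eq_zero]
    calc _ ≤ ∫⁻ t in Set.Ioi (ρ ^ (-a)), 0 := by
            refine setLIntegral_mono' measurableSet_Ioi fun t ht => ?_
            rw [Measure.restrict_apply (measurableSet_lt measurable_const (by fun_prop))]
            rw [nonpos_iff_eq_zero]
            convert measure_empty (μ := ν)
            ext y
            simp only [Set.mem_inter_iff, Set.mem_setOf_eq, Set.mem_empty_iff_false, iff_false,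
              not_and, not_le]
            intro hy
            by_contra! hcon
            have := Real.rpow_le_rpow_of_nonpos hρ hcon (show -a ≤ 0 by linarith)
            simp only [Set.mem_Ioi] at ht
            linarith
      _ = 0 := by simp
  rw [h2, add_zero]
  calc _ ≤ ∫⁻ t in Set.Ioc 0 (ρ ^ (-a)), ENNReal.ofReal V * ENNReal.ofReal (t ^ (-(D / a))) := by
          refine setLIntegral_mono' measurableSet_Ioc fun c hc => ?_
          have hc := hc.1
          rw [← ENNReal.ofReal_mul hV.le]
          have : V * c ^ (-(D / a)) = V * (c ^ (-(1 / a))) ^ D := by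
            rw [← Real.rpow_mul hc.le]; congr 2; field_simp
          rw [this]
          refine (Measure.restrict_apply_le _ _).trans
            ((measure_mono ?_).trans (hw _ (by positivity)))
          intro y hy
          simp only [Set.mem_setOf_eq] at hy ⊢
          rcases (hN0 y).eq_or_lt with h | h
          · rw [← h]; positivity
          have := Real.rpow_lt_rpow_of_neg hc hy (show -(1 / a) < 0 by simpa using h0)
          rwa [← Real.rpow_mul h.le, show -a * -(1 / a) = 1 by field_simp, Real.rpow_one] at this
    _ = _ := by
          rw [lintegral_const_mul _ (by fun_prop), aux_lint_Ioo_rpow (by linarith) hρa.le,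
            ← ENNReal.ofReal_mul hV.le, ← Real.rpow_mul hρ.le]
          congr 1
          rw [show -a * (-(D / a) + 1) = D - a by field_simp; ring,
            show -(D / a) + 1 = 1 - D / a by ring]
          ring



/-- layer cake with a density -/
lemma layer_dens {X : Type*} [MeasurableSpace X] (μ : Measure X) (h : X → ℝ) (hm : Measurable h)
    (h0 : ∀ x, 0 ≤ h x) (G : X → ℝ≥0∞) (hG : Measurable G) :
    ∫⁻ x, ENNReal.ofReal (h x) * G x ∂μ = ∫⁻ a in Set.Ioi (0:ℝ), ∫⁻ x in {x | a < h x}, G x ∂μ := by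
  have := lintegral_eq_lintegral_meas_lt (μ.withDensity G) (Eventually.of_forall h0) hm.aemeasurable
  rw [lintegral_withDensity_eq_lintegral_mul _ hG (by fun_prop)] at this
  simp only [Pi.mul_apply] at this
  simp_rw [mul_comm (ENNReal.ofReal (h _))]
  rw [this]
  refine lintegral_congr fun a => ?_
  rw [withDensity_apply _ (measurableSet_lt measurable_const hm)]

lemma weak_cheb {X : Type*} [MeasurableSpace X] (μ : Measure X) (h : X → ℝ) (hm : Measurable h)
    (h0 : ∀ x, 0 ≤ h x) {p : ℝ} (hp : 0 < p) (hn : ∫⁻ x, ENNReal.ofReal (h x ^ p) ∂μ ≤ 1)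
    {a : ℝ} (ha : 0 < a) : μ {x | a < h x} ≤ ENNReal.ofReal (a ^ (-p)) := by
  have h1 : ENNReal.ofReal (a ^ p) ≠ 0 := by simp; positivity
  have := meas_ge_le_lintegral_div (μ := μ) (f := fun x => ENNReal.ofReal (h x ^ p))
    (by fun_prop) h1 ENNReal.ofReal_ne_top
  calc μ {x | a < h x} ≤ μ {x | ENNReal.ofReal (a ^ p) ≤ ENNReal.ofReal (h x ^ p)} := by
        refine measure_mono fun x hx => ?_
        exact ENNReal.ofReal_le_ofReal (Real.rpow_le_rpow ha.le (le_of_lt hx) hp.le)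
    _ ≤ _ := this
    _ ≤ 1 / ENNReal.ofReal (a ^ p) := by gcongr
    _ = _ := by
        rw [Real.rpow_neg ha.le, one_div, ENNReal.ofReal_inv_of_pos (by positivity)]

lemma dist_meas {X : Type*} [MeasurableSpace X] (μ : Measure X) (h : X → ℝ) :
    Measurable fun a : ℝ => μ {x | a < h x} := by
  refine Antitone.measurable fun a b hab => measure_mono fun x hx => ?_
  exact lt_of_le_of_lt hab hx

lemma weak_half {X : Type*} [MeasurableSpace X] (μ : Measure X) (h : X → ℝ) (hm : Measurable h)
    (h0 : ∀ x, 0 ≤ h x) {p θ : ℝ} (hp : 0 < p) (hn : ∫⁻ x, ENNReal.ofReal (h x ^ p) ∂μ ≤ 1)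
    (hθ : 0 < θ) (hpθ : p * θ < 1) {S : ℝ} (hS : 0 ≤ S) :
    ∫⁻ a in Set.Ioc (0:ℝ) S, (μ {x | a < h x}) ^ θ ≤
      ENNReal.ofReal (1 / (1 - p * θ)) * ENNReal.ofReal (S ^ (1 - p * θ)) := by
  have hpp : 0 < 1 - p * θ := by linarith
  calc _ ≤ ∫⁻ a in Set.Ioc (0:ℝ) S, ENNReal.ofReal (a ^ (-(p * θ))) := by
        refine setLIntegral_mono' measurableSet_Ioc fun a ha => ?_
        refine (ENNReal.rpow_le_rpow (weak_cheb μ h hm h0 hp hn ha.1) hθ.le).trans (le_of_eq ?_)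
        have := ha.1
        rw [ENNReal.ofReal_rpow_of_pos (by positivity), ← Real.rpow_mul this.le]
        ring_nf
    _ = _ := by
        rw [aux_lint_Ioo_rpow (by linarith) hS, ← ENNReal.ofReal_mul (by positivity)]
        congr 1
        rw [show -(p * θ) + 1 = 1 - p * θ by ring]; ring

lemma strong_half {X : Type*} [MeasurableSpace X] (μ : Measure X) (h : X → ℝ) (hm : Measurable h)
    (h0 : ∀ x, 0 ≤ h x) {p : ℝ} (hp : 1 < p) (hn : ∫⁻ x, ENNReal.ofReal (h x ^ p) ∂μ ≤ 1) :
    ∫⁻ a in Set.Ioi (0:ℝ), μ {x | a < h x} * ENNReal.ofReal (a ^ (p - 1)) ≤ 1 := by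
  rw [lintegral_rpow_eq_lintegral_meas_lt_mul μ (Eventually.of_forall h0) hm.aemeasurable
    (by linarith)] at hn
  refine le_trans ?_ hn
  refine le_mul_of_one_le_left (zero_le) ?_
  rw [← ENNReal.ofReal_one]; exact ENNReal.ofReal_le_ofReal hp.le

lemma weak_young_bilin {X Y : Type*} [MeasurableSpace X] [MeasurableSpace Y]
    (μ : Measure X) (ν : Measure Y) [SigmaFinite μ] [SigmaFinite ν]
    (k : X → Y → ℝ) (hk : Measurable (Function.uncurry k)) (hk0 : ∀ x y, 0 ≤ k x y)
    (p s r M : ℝ) (hp : 1 < p) (hs : 1 < s) (hr : 1 < r) (hM : 0 < M)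
    (hsum : 1 / p + 1 / s + 1 / r = 2)
    (hw1 : ∀ x, ∀ c : ℝ, 0 < c → ν {y | c < k x y} ≤ ENNReal.ofReal (M * c ^ (-r)))
    (hw2 : ∀ y, ∀ c : ℝ, 0 < c → μ {x | c < k x y} ≤ ENNReal.ofReal (M * c ^ (-r))) :
    ∃ D : ℝ, 0 < D ∧ ∀ (h : X → ℝ) (f : Y → ℝ), Measurable h → Measurable f →
      (∀ x, 0 ≤ h x) → (∀ y, 0 ≤ f y) → ∫⁻ x, ENNReal.ofReal (h x ^ s) ∂μ ≤ 1 →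
      ∫⁻ y, ENNReal.ofReal (f y ^ p) ∂ν ≤ 1 →
      ∫⁻ x, ENNReal.ofReal (h x) * ∫⁻ y, ENNReal.ofReal (f y) * ENNReal.ofReal (k x y) ∂ν ∂μ
        ≤ ENNReal.ofReal D := by
  obtain ⟨C1, hC1, H1⟩ := kolmogorov (Y := Y) M r hM hr
  obtain ⟨C2, hC2, H2⟩ := kolmogorov (Y := X) M r hM hr
  set θ := 1 - 1 / r with hθ
  have hr0 : 1 / r < 1 := by rw [div_lt_one (by linarith)]; exact hr
  have hr0' : 0 < 1 / r := by positivity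
  have hp1 : 1 / p < 1 := by rw [div_lt_one (by linarith)]; exact hp
  have hs1 : 1 / s < 1 := by rw [div_lt_one (by linarith)]; exact hs
  have hθ0 : 0 < θ := by linarith
  have hp0 : 0 < p := by linarith
  have hs0 : 0 < s := by linarith
  have hpθ : p * θ < 1 := by
    have : θ < 1 / p := by linarith
    rw [lt_div_iff₀ hp0] at this; linarith
  have hsθ : s * θ < 1 := by
    have : θ < 1 / s := by linarith
    rw [lt_div_iff₀ hs0] at this; linarith
  have hpp : 0 < 1 - p * θ := by linarith
  have hss : 0 < 1 - s * θ := by linarith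
  refine ⟨C1 * (1 / (1 - p * θ)) + C2 * (1 / (1 - s * θ)), by positivity, ?_⟩
  intro h f hh hf h0 f0 hhn hfn
  have hkm : Measurable fun z : X × Y => ENNReal.ofReal (k z.1 z.2) := hk.ennreal_ofReal
  have hkm' : Measurable fun z : Y × X => ENNReal.ofReal (k z.2 z.1) :=
    (hk.comp measurable_swap).ennreal_ofReal
  set κ := s / p with hκ
  have hκ0 : 0 < κ := by positivity
  have eκ1 : κ * (1 - p * θ) = s - 1 := by
    have : 1 / p = 2 - 1 / s - 1 / r := by linarith
    rw [hκ, show s / p * (1 - p * θ) = s * (1 / p) - s * θ by field_simp, this, hθ]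
    field_simp; ring
  have eκ2 : κ⁻¹ * (1 - s * θ) = p - 1 := by
    have : 1 / s = 2 - 1 / p - 1 / r := by linarith
    rw [hκ, inv_div, show p / s * (1 - s * θ) = p * (1 / s) - p * θ by field_simp, this, hθ]
    field_simp; ring
  set φ := fun a : ℝ => μ {x | a < h x} with hφ
  set ψ := fun b : ℝ => ν {y | b < f y} with hψ
  have hφm : Measurable φ := dist_meas μ h
  have hψm : Measurable ψ := dist_meas ν f
  set S := fun a b : ℝ => ∫⁻ y in {y | b < f y}, ∫⁻ x in {x | a < h x}, ENNReal.ofReal (k x y) ∂μ ∂ν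
  have hA : ∀ a, MeasurableSet {x | a < h x} := fun a => measurableSet_lt measurable_const hh
  have hB : ∀ b, MeasurableSet {y | b < f y} := fun b => measurableSet_lt measurable_const hf
  have S1 : ∀ a b, S a b ≤ ENNReal.ofReal C2 * φ a ^ θ * ψ b := by
    intro a b
    calc S a b ≤ ∫⁻ y in {y | b < f y}, ENNReal.ofReal C2 * φ a ^ θ ∂ν := by
          refine lintegral_mono fun y => ?_
          exact H2 μ (fun x => k x y) (hk.comp (measurable_id.prodMk measurable_const))
            (fun x => hk0 x y) (hw2 y) _ (hA a)
      _ = _ := by rw [setLIntegral_const]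
  have S2 : ∀ a b, S a b ≤ ENNReal.ofReal C1 * ψ b ^ θ * φ a := by
    intro a b
    calc S a b = ∫⁻ x in {x | a < h x}, ∫⁻ y in {y | b < f y}, ENNReal.ofReal (k x y) ∂ν ∂μ :=
          lintegral_lintegral_swap hkm'.aemeasurable
      _ ≤ ∫⁻ x in {x | a < h x}, ENNReal.ofReal C1 * ψ b ^ θ ∂μ := by
          refine lintegral_mono fun x => ?_
          exact H1 ν (fun y => k x y) (hk.comp (measurable_const.prodMk measurable_id))
            (fun y => hk0 x y) (hw1 x) _ (hB b)
      _ = _ := by rw [setLIntegral_const]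
  have hI : ∫⁻ x, ENNReal.ofReal (h x) * ∫⁻ y, ENNReal.ofReal (f y) * ENNReal.ofReal (k x y) ∂ν ∂μ
      = ∫⁻ a in Set.Ioi (0:ℝ), ∫⁻ b in Set.Ioi (0:ℝ), S a b := by
    rw [layer_dens μ h hh h0 _ (Measurable.lintegral_prod_right'
      (f := fun z : X × Y => ENNReal.ofReal (f z.2) * ENNReal.ofReal (k z.1 z.2))
      ((hf.comp measurable_snd).ennreal_ofReal.mul hkm))]
    refine lintegral_congr fun a => ?_
    rw [lintegral_lintegral_swap ((hf.comp measurable_snd).ennreal_ofReal.mul hkm).aemeasurable]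
    rw [← layer_dens ν f hf f0 (fun y => ∫⁻ x in {x | a < h x}, ENNReal.ofReal (k x y) ∂μ)
      (Measurable.lintegral_prod_right' hkm')]
    refine lintegral_congr fun y => ?_
    exact lintegral_const_mul (ENNReal.ofReal (f y)) (f := fun x => ENNReal.ofReal (k x y))
      (hkm.comp (measurable_id.prodMk measurable_const))
  rw [hI]
  have hsplit : ∀ a, 0 < a → ∫⁻ b in Set.Ioi (0:ℝ), S a b ≤
      ENNReal.ofReal C1 * (φ a * (ENNReal.ofReal (1 / (1 - p * θ)) * ENNReal.ofReal (a ^ (s - 1))))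
       + ENNReal.ofReal C2 * ∫⁻ b in Set.Ioi (0:ℝ), (Set.Ioc (0:ℝ) (b ^ κ⁻¹)).indicator (fun a => φ a ^ θ) a * ψ b := by
    intro a ha
    have haκ : 0 < a ^ κ := by positivity
    rw [← Set.Ioc_union_Ioi_eq_Ioi haκ.le]
    refine (lintegral_union_le _ _ _).trans (add_le_add ?_ ?_)
    · calc _ ≤ ∫⁻ b in Set.Ioc 0 (a ^ κ), ENNReal.ofReal C1 * φ a * ψ b ^ θ := by
            refine lintegral_mono fun b => (S2 a b).trans (le_of_eq (by ring))
        _ = ENNReal.ofReal C1 * φ a * ∫⁻ b in Set.Ioc 0 (a ^ κ), ψ b ^ θ := by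
            rw [lintegral_const_mul _ (hψm.pow_const _)]
        _ ≤ ENNReal.ofReal C1 * φ a * (ENNReal.ofReal (1 / (1 - p * θ)) *
              ENNReal.ofReal ((a ^ κ) ^ (1 - p * θ))) := by
            gcongr
            exact weak_half ν f hf f0 hp0 hfn hθ0 hpθ haκ.le
        _ = _ := by rw [← Real.rpow_mul ha.le, eκ1]; ring
    · rw [← lintegral_const_mul]
      · calc _ ≤ ∫⁻ b in Set.Ioi (a ^ κ), ENNReal.ofReal C2 * ((Set.Ioc (0:ℝ) (b ^ κ⁻¹)).indicator (fun a => φ a ^ θ) a * ψ b) := by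
              refine setLIntegral_mono' measurableSet_Ioi fun b hb => ?_
              rw [Set.indicator_of_mem]
              · exact (S1 a b).trans (le_of_eq (by ring))
              · refine ⟨ha, ?_⟩
                have hb' : a ^ κ < b := hb
                have := Real.rpow_le_rpow haκ.le hb'.le (inv_nonneg.2 hκ0.le)
                rwa [← Real.rpow_mul ha.le, mul_inv_cancel₀ hκ0.ne', Real.rpow_one] at this
          _ ≤ _ := by
              refine lintegral_mono_set ?_
              exact Set.subset_union_right
      · refine Measurable.mul ?_ hψm
        have : (fun b : ℝ => (Set.Ioc (0:ℝ) (b ^ κ⁻¹)).indicator (fun a => φ a ^ θ) a)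
            = {b : ℝ | a ≤ b ^ κ⁻¹}.indicator (fun _ => φ a ^ θ) := by
          ext b; simp [Set.indicator, ha]
        rw [this]
        exact measurable_const.indicator (measurableSet_le measurable_const (by fun_prop))
  calc _ ≤ ∫⁻ a in Set.Ioi (0:ℝ), (ENNReal.ofReal C1 * (φ a * (ENNReal.ofReal (1 / (1 - p * θ)) * ENNReal.ofReal (a ^ (s - 1))))
       + ENNReal.ofReal C2 * ∫⁻ b in Set.Ioi (0:ℝ), (Set.Ioc (0:ℝ) (b ^ κ⁻¹)).indicator (fun a => φ a ^ θ) a * ψ b) :=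
        setLIntegral_mono' measurableSet_Ioi fun a ha => hsplit a ha
    _ = ENNReal.ofReal C1 * (ENNReal.ofReal (1 / (1 - p * θ)) * ∫⁻ a in Set.Ioi (0:ℝ), φ a * ENNReal.ofReal (a ^ (s - 1)))
       + ENNReal.ofReal C2 * ∫⁻ a in Set.Ioi (0:ℝ), ∫⁻ b in Set.Ioi (0:ℝ), (Set.Ioc (0:ℝ) (b ^ κ⁻¹)).indicator (fun a => φ a ^ θ) a * ψ b := by
        rw [lintegral_add_left (by fun_prop),
          lintegral_const_mul' (ENNReal.ofReal C2) _ ENNReal.ofReal_ne_top]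
        congr 1
        rw [← lintegral_const_mul _ (by fun_prop), ← lintegral_const_mul _ (by fun_prop)]
        refine lintegral_congr fun a => by ring
    _ ≤ ENNReal.ofReal C1 * (ENNReal.ofReal (1 / (1 - p * θ)) * 1)
       + ENNReal.ofReal C2 * ENNReal.ofReal (1 / (1 - s * θ)) := by
        gcongr
        · exact strong_half μ h hh h0 hs hhn
        · rw [lintegral_lintegral_swap]
          · calc _ ≤ ∫⁻ b in Set.Ioi (0:ℝ), ENNReal.ofReal (1 / (1 - s * θ)) * (ψ b * ENNReal.ofReal (b ^ (p - 1))) := by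
                  refine setLIntegral_mono' measurableSet_Ioi fun b hb => ?_
                  have hb : 0 < b := hb
                  rw [lintegral_mul_const _ ((hφm.pow_const _).indicator measurableSet_Ioc),
                    lintegral_indicator measurableSet_Ioc, Measure.restrict_restrict measurableSet_Ioc,
                    Set.inter_eq_left.2 Set.Ioc_subset_Ioi_self]
                  calc _ ≤ ENNReal.ofReal (1 / (1 - s * θ)) * ENNReal.ofReal ((b ^ κ⁻¹) ^ (1 - s * θ)) * ψ b := by
                        gcongr
                        exact weak_half μ h hh h0 hs0 hhn hθ0 hsθ (by positivity)
                    _ = _ := by rw [← Real.rpow_mul hb.le, eκ2]; ring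
              _ ≤ ENNReal.ofReal (1 / (1 - s * θ)) * 1 := by
                  rw [lintegral_const_mul _ (by fun_prop)]
                  gcongr
                  exact strong_half ν f hf f0 hp hfn
              _ = _ := mul_one _
          · apply Measurable.aemeasurable
            refine Measurable.mul ?_ (hψm.comp measurable_snd)
            have : (fun z : ℝ × ℝ => (Set.Ioc (0:ℝ) (z.2 ^ κ⁻¹)).indicator (fun a => φ a ^ θ) z.1)
              = {z : ℝ × ℝ | 0 < z.1 ∧ z.1 ≤ z.2 ^ κ⁻¹}.indicator (fun z => φ z.1 ^ θ) := by
              ext z; simp [Set.indicator]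
            change Measurable (fun z : ℝ × ℝ => (Set.Ioc (0:ℝ) (z.2 ^ κ⁻¹)).indicator (fun a => φ a ^ θ) z.1)
            rw [this]
            refine ((hφm.comp measurable_fst).pow_const _).indicator ?_
            exact (measurableSet_lt measurable_const measurable_fst).inter
              (measurableSet_le measurable_fst (by fun_prop))
    _ = _ := by
        rw [mul_one, ENNReal.ofReal_add (by positivity) (by positivity), ENNReal.ofReal_mul hC1.le,
          ENNReal.ofReal_mul hC2.le]



lemma Lq_duality {X : Type*} [MeasurableSpace X] (μ : Measure X) [SigmaFinite μ]
    (F : X → ℝ≥0∞) (hF : Measurable F) (q s D : ℝ) (hs : 1 < s) (hq : 1 / q + 1 / s = 1) (hD : 0 < D)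
    (H : ∀ h : X → ℝ, Measurable h → (∀ x, 0 ≤ h x) → ∫⁻ x, ENNReal.ofReal (h x ^ s) ∂μ ≤ 1 →
      ∫⁻ x, ENNReal.ofReal (h x) * F x ∂μ ≤ ENNReal.ofReal D) :
    ∫⁻ x, F x ^ q ∂μ ≤ ENNReal.ofReal (D ^ q) := by
  have hs1 : 1 / s < 1 := by rw [div_lt_one (by linarith)]; exact hs
  have hs0 : 0 < 1 / s := by positivity
  have hq0 : 0 < 1 / q := by linarith
  have hqp : 0 < q := by simpa using hq0
  have hq1 : 1 < q := by
    have : 1 / q < 1 := by linarith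
    rwa [div_lt_one hqp] at this
  have hqs : (q - 1) * s = q := by field_simp at hq; linarith
  set S := spanningSets μ
  set G : ℕ → X → ℝ≥0∞ := fun N => (S N).indicator (fun x => min (F x) N) with hG
  have hGm : ∀ N, Measurable (G N) := fun N =>
    (hF.min measurable_const).indicator (measurableSet_spanningSets μ N)
  have hGF : ∀ N x, G N x ≤ F x := by
    intro N x
    simp only [hG, Set.indicator]
    split_ifs
    · exact min_le_left _ _
    · exact zero_le
  have hGN : ∀ N x, G N x ≤ N := by
    intro N x
    simp only [hG, Set.indicator]
    split_ifs
    · exact min_le_right _ _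
    · exact zero_le
  have hGt : ∀ N x, G N x ≠ ∞ := fun N x => ((hGN N x).trans_lt (by simp)).ne
  have key : ∀ N, ∫⁻ x, G N x ^ q ∂μ ≤ ENNReal.ofReal (D ^ q) := by
    intro N
    set J := ∫⁻ x, G N x ^ q ∂μ with hJ
    have hJt : J ≠ ∞ := by
      have : J ≤ ∫⁻ x in S N, (N : ℝ≥0∞) ^ q ∂μ := by
        rw [hJ, ← lintegral_indicator (measurableSet_spanningSets μ N)]
        refine lintegral_mono fun x => ?_
        simp only [hG, Set.indicator]
        split_ifs
        · exact ENNReal.rpow_le_rpow (min_le_right _ _) hqp.le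
        · simp [hqp]
      refine (this.trans_lt ?_).ne
      rw [setLIntegral_const]
      exact ENNReal.mul_lt_top (ENNReal.rpow_lt_top_of_nonneg hqp.le (by simp))
        (measure_spanningSets_lt_top μ N)
    rcases eq_or_ne J 0 with h0 | h0
    · rw [h0]; exact zero_le
    set j := J.toReal with hj
    have hj0 : 0 < j := ENNReal.toReal_pos h0 hJt
    have hJj : J = ENNReal.ofReal j := (ENNReal.ofReal_toReal hJt).symm
    have hGr : ∀ x, G N x = ENNReal.ofReal (G N x).toReal := fun x => (ENNReal.ofReal_toReal (hGt N x)).symm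
    have hGq : ∀ x, ENNReal.ofReal ((G N x).toReal ^ q) = G N x ^ q := fun x => by
      conv_rhs => rw [hGr x]
      rw [ENNReal.ofReal_rpow_of_nonneg ENNReal.toReal_nonneg hqp.le]
    have h1 := H (fun x => (G N x).toReal ^ (q - 1) * j ^ (-(1 / s)))
      (((hGm N).ennreal_toReal.pow_const _).mul_const _) (fun x => by positivity) ?_
    · have h2 : ∫⁻ x, G N x ^ q * ENNReal.ofReal (j ^ (-(1 / s))) ∂μ ≤ ENNReal.ofReal D := by
        refine le_trans (lintegral_mono fun x => ?_) h1
        calc _ = ENNReal.ofReal ((G N x).toReal ^ (q - 1) * j ^ (-(1 / s))) * G N x := by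
              rw [← hGq]
              conv_rhs => rw [hGr x]
              rw [ENNReal.toReal_ofReal ENNReal.toReal_nonneg, ← ENNReal.ofReal_mul (by positivity),
                ← ENNReal.ofReal_mul (by positivity)]
              congr 1
              rcases (ENNReal.toReal_nonneg (a := G N x)).eq_or_lt with hz | hz
              · rw [← hz, Real.zero_rpow hqp.ne']; simp
              · rw [Real.rpow_sub_one hz.ne']; field_simp
          _ ≤ _ := by gcongr; exact hGF N x
      rw [lintegral_mul_const _ ((hGm N).pow_const _), ← hJ, hJj, ← ENNReal.ofReal_mul hj0.le,
        ENNReal.ofReal_le_ofReal_iff hD.le] at h2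
      have e : j * j ^ (-(1 / s)) = j ^ (1 / q) := by
        rw [show 1 / q = 1 + -(1 / s) by linarith, Real.rpow_add hj0, Real.rpow_one]
      rw [e] at h2
      rw [hJj]
      refine ENNReal.ofReal_le_ofReal ?_
      have := Real.rpow_le_rpow (by positivity) h2 hqp.le
      rwa [← Real.rpow_mul hj0.le, one_div_mul_cancel hqp.ne', Real.rpow_one] at this
    · have : ∀ x, ENNReal.ofReal (((G N x).toReal ^ (q - 1) * j ^ (-(1 / s))) ^ s)
          = G N x ^ q * ENNReal.ofReal j⁻¹ := by
        intro x
        rw [← hGq, ← ENNReal.ofReal_mul (by positivity), Real.mul_rpow (by positivity) (by positivity),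
          ← Real.rpow_mul (by positivity), ← Real.rpow_mul (by positivity), hqs,
          show -(1 / s) * s = -1 by field_simp, Real.rpow_neg_one]
      simp_rw [this]
      rw [lintegral_mul_const _ ((hGm N).pow_const _), ← hJ, hJj, ← ENNReal.ofReal_mul hj0.le,
        mul_inv_cancel₀ hj0.ne', ENNReal.ofReal_one]
  have hlim : Tendsto (fun N => ∫⁻ x, G N x ^ q ∂μ) atTop (nhds (∫⁻ x, F x ^ q ∂μ)) := by
    refine lintegral_tendsto_of_tendsto_of_monotone (fun N => ((hGm N).pow_const _).aemeasurable) ?_ ?_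
    · refine Eventually.of_forall fun x N N' hNN => ?_
      refine ENNReal.rpow_le_rpow ?_ hqp.le
      simp only [hG, Set.indicator]
      split_ifs with h1 h2
      · exact min_le_min le_rfl (by exact_mod_cast hNN)
      · exact absurd (monotone_spanningSets μ hNN h1) h2
      · exact zero_le
      · exact zero_le
    · refine Eventually.of_forall fun x => ?_
      refine (ENNReal.continuous_rpow_const.tendsto _).comp ?_
      have h1 : Tendsto (fun N : ℕ => min (F x) (N : ℝ≥0∞)) atTop (nhds (F x)) := by
        have := (tendsto_const_nhds (x := F x) (f := atTop (α := ℕ))).min ENNReal.tendsto_nat_nhds_top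
        simpa using this
      refine h1.congr' ?_
      have hx : x ∈ ⋃ i, S i := by rw [iUnion_spanningSets]; trivial
      obtain ⟨i, hi⟩ := Set.mem_iUnion.1 hx
      filter_upwards [eventually_ge_atTop i] with N hN
      simp only [hG]
      rw [Set.indicator_of_mem (monotone_spanningSets μ hN hi)]
  exact le_of_tendsto' hlim key

lemma weak_young {X Y : Type*} [MeasurableSpace X] [MeasurableSpace Y]
    (μ : Measure X) (ν : Measure Y) [SigmaFinite μ] [SigmaFinite ν]
    (k : X → Y → ℝ) (hk : Measurable (Function.uncurry k)) (hk0 : ∀ x y, 0 ≤ k x y)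
    (p q s r M : ℝ) (hp : 1 < p) (hs : 1 < s) (hr : 1 < r) (hM : 0 < M)
    (hq : 1 / q + 1 / s = 1)
    (hsum : 1 / p + 1 / s + 1 / r = 2)
    (hw1 : ∀ x, ∀ c : ℝ, 0 < c → ν {y | c < k x y} ≤ ENNReal.ofReal (M * c ^ (-r)))
    (hw2 : ∀ y, ∀ c : ℝ, 0 < c → μ {x | c < k x y} ≤ ENNReal.ofReal (M * c ^ (-r))) :
    ∃ D : ℝ, 0 < D ∧ ∀ (f : Y → ℝ), Measurable f → (∀ y, 0 ≤ f y) → 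
      ∫⁻ y, ENNReal.ofReal (f y ^ p) ∂ν ≤ 1 →
      ∫⁻ x, (∫⁻ y, ENNReal.ofReal (f y) * ENNReal.ofReal (k x y) ∂ν) ^ q ∂μ
        ≤ ENNReal.ofReal D := by
  obtain ⟨D, hD, H⟩ := weak_young_bilin μ ν k hk hk0 p s r M hp hs hr hM hsum hw1 hw2
  refine ⟨D ^ q, by positivity, fun f hf hf0 hfn => ?_⟩
  refine Lq_duality μ _ ?_ q s D hs hq hD fun h hh hh0 hhn => H h f hh hf hh0 hf0 hhn hfn
  exact Measurable.lintegral_prod_right'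
      (f := fun z : X × Y => ENNReal.ofReal (f z.2) * ENNReal.ofReal (k z.1 z.2))
      ((hf.comp measurable_snd).ennreal_ofReal.mul hk.ennreal_ofReal)



lemma znorm_eq {n : ℕ} (z : Fin n → ℂ) : znorm z = ‖WithLp.toLp 2 z‖ := by
  rw [EuclideanSpace.norm_eq, znorm]
  simp [Complex.normSq_eq_norm_sq]

lemma znorm_nonneg {n : ℕ} (z : Fin n → ℂ) : 0 ≤ znorm z := Real.sqrt_nonneg _

lemma znorm_add_le {n : ℕ} (z w : Fin n → ℂ) : znorm (z + w) ≤ znorm z + znorm w := by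
  simp only [znorm_eq, WithLp.toLp_add]; exact norm_add_le _ _

lemma znorm_neg {n : ℕ} (z : Fin n → ℂ) : znorm (-z) = znorm z := by
  simp only [znorm_eq, WithLp.toLp_neg]; exact norm_neg _

lemma norm_le_znorm {n : ℕ} (z : Fin n → ℂ) : ‖z‖ ≤ znorm z := by
  rw [pi_norm_le_iff_of_nonneg (znorm_nonneg z)]
  intro i
  rw [znorm_eq]
  exact PiLp.norm_apply_le (WithLp.toLp 2 z) i

lemma znorm_zero {n : ℕ} : znorm (0 : Fin n → ℂ) = 0 := by simp [znorm]

lemma znorm_pos {n : ℕ} {z : Fin n → ℂ} (hz : z ≠ 0) : 0 < znorm z :=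
  (norm_pos_iff.2 hz).trans_le (norm_le_znorm z)

lemma znorm_sub_comm {n : ℕ} (z w : Fin n → ℂ) : znorm (z - w) = znorm (w - z) := by
  rw [← znorm_neg, neg_sub]

@[fun_prop]
lemma znorm_cont {n : ℕ} : Continuous (znorm (n := n)) := by
  unfold znorm
  have : Continuous Complex.normSq := Complex.continuous_normSq
  fun_prop

@[fun_prop]
lemma znorm_meas {n : ℕ} : Measurable (znorm (n := n)) := znorm_cont.measurable

lemma im_sum_le {n : ℕ} (z w : Fin n → ℂ) :
    |(∑ j, z j * (starRingEnd ℂ) (w j)).im| ≤ znorm z * znorm w := by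
  have h := norm_inner_le_norm (𝕜 := ℂ) (WithLp.toLp 2 w) (WithLp.toLp 2 z)
  rw [← znorm_eq, ← znorm_eq, mul_comm] at h
  refine le_trans ?_ h
  refine le_trans (le_of_eq ?_) (Complex.abs_im_le_norm _)
  congr 2

lemma im_sum_swap {n : ℕ} (z w : Fin n → ℂ) :
    (∑ j, z j * (starRingEnd ℂ) (w j)).im = - (∑ j, w j * (starRingEnd ℂ) (z j)).im := by
  simp only [Complex.im_sum, ← Finset.sum_neg_distrib]
  refine Finset.sum_congr rfl fun j _ => ?_
  simp [Complex.mul_im]; ring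

lemma im_sum_sub {n : ℕ} (z w v : Fin n → ℂ) :
    (∑ j, (z - w) j * (starRingEnd ℂ) (v j)).im
     = (∑ j, z j * (starRingEnd ℂ) (v j)).im - (∑ j, w j * (starRingEnd ℂ) (v j)).im := by
  simp [sub_mul, Finset.sum_sub_distrib]

lemma im_sum_neg {n : ℕ} (w v : Fin n → ℂ) :
    (∑ j, (-w) j * (starRingEnd ℂ) (v j)).im = - (∑ j, w j * (starRingEnd ℂ) (v j)).im := by
  simp [Finset.sum_neg_distrib]

lemma im_sum_self {n : ℕ} (w : Fin n → ℂ) : (∑ j, w j * (starRingEnd ℂ) (w j)).im = 0 := by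
  have := im_sum_swap w w; linarith

lemma Hnorm_nonneg {n : ℕ} (u : Hn n) : 0 ≤ Hnorm u := by
  unfold Hnorm; positivity

lemma Hnorm_pow {n : ℕ} (u : Hn n) : Hnorm u ^ 4 = znorm u.1 ^ 4 + u.2 ^ 2 := by
  unfold Hnorm
  rw [← Real.rpow_natCast, ← Real.rpow_mul (by positivity)]
  norm_num

lemma znorm_le_Hnorm {n : ℕ} (u : Hn n) : znorm u.1 ≤ Hnorm u := by
  have h := Hnorm_pow u
  refine le_of_pow_le_pow_left₀ (n := 4) (by norm_num) (Hnorm_nonneg u) ?_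
  nlinarith [sq_nonneg u.2]

lemma abs_le_Hnorm {n : ℕ} (u : Hn n) : |u.2| ≤ Hnorm u ^ 2 := by
  have h := Hnorm_pow u
  refine abs_le_of_sq_le_sq ?_ (by positivity)
  have : 0 ≤ znorm u.1 ^ 4 := by positivity
  nlinarith

@[fun_prop]
lemma Hnorm_cont {n : ℕ} : Continuous (Hnorm (n := n)) := by
  unfold Hnorm
  refine Continuous.rpow_const (by fun_prop) (fun _ => Or.inr (by norm_num))

lemma Hdist_cont {n : ℕ} : Continuous (Function.uncurry (Hdist (n := n))) := by
  unfold Hdist Function.uncurry Hmul Hinv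
  refine Hnorm_cont.comp ?_
  fun_prop

lemma Hdist_meas {n : ℕ} : Measurable (Function.uncurry (Hdist (n := n))) := Hdist_cont.measurable

@[fun_prop]
lemma Hnorm_meas {n : ℕ} : Measurable (Hnorm (n := n)) := Hnorm_cont.measurable

lemma Hdist_nonneg {n : ℕ} (u v : Hn n) : 0 ≤ Hdist u v := Hnorm_nonneg _

lemma Hdist_zero {n : ℕ} (v : Hn n) : Hdist 0 v = Hnorm v := by
  simp [Hdist, Hmul, Hinv]

lemma Hball_zero {n : ℕ} (R : ℝ) : Hball (0 : Hn n) R = {v | Hnorm v < R} := by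
  simp [Hball, Hdist_zero]

lemma Hdist_fst {n : ℕ} (u v : Hn n) : (Hmul (Hinv u) v).1 = v.1 - u.1 := by
  simp [Hmul, Hinv]; ring

lemma Hdist_snd {n : ℕ} (u v : Hn n) : (Hmul (Hinv u) v).2
    = v.2 - (u.2 + 2 * (∑ j, u.1 j * (starRingEnd ℂ) (v.1 j)).im) := by
  simp only [Hmul, Hinv]; rw [im_sum_neg]; ring

lemma Hdist_comm {n : ℕ} (u v : Hn n) : Hdist u v = Hdist v u := by
  unfold Hdist Hnorm
  rw [Hdist_fst, Hdist_fst, Hdist_snd, Hdist_snd, znorm_sub_comm, im_sum_swap u.1 v.1]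
  congr 2
  ring

lemma znorm_sub_le_Hdist {n : ℕ} (u v : Hn n) : znorm (v.1 - u.1) ≤ Hdist u v := by
  have := znorm_le_Hnorm (Hmul (Hinv u) v)
  rwa [Hdist_fst] at this

lemma abs_le_Hdist {n : ℕ} (u v : Hn n) :
    |v.2 - (u.2 + 2 * (∑ j, u.1 j * (starRingEnd ℂ) (v.1 j)).im)| ≤ Hdist u v ^ 2 := by
  have := abs_le_Hnorm (Hmul (Hinv u) v)
  rwa [Hdist_snd] at this

lemma Hdist_lower {n : ℕ} (u v : Hn n) (h : 4 * Hnorm v ≤ Hnorm u) : Hnorm u / 4 ≤ Hdist u v := by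
  by_contra! hd
  set a := Hnorm v
  set b := Hnorm u with hb
  set d := Hdist u v
  have ha0 : 0 ≤ a := Hnorm_nonneg v
  have hd0 : 0 ≤ d := Hdist_nonneg u v
  have h1 : znorm (v.1 - u.1) ≤ d := znorm_sub_le_Hdist u v
  have h2 := abs_le_Hdist u v
  have h3 : znorm v.1 ≤ a := znorm_le_Hnorm v
  have h4 : |v.2| ≤ a ^ 2 := abs_le_Hnorm v
  have h5 : znorm u.1 ≤ a + d := by
    have := znorm_add_le v.1 (-(v.1 - u.1))
    rw [znorm_neg] at this
    simp only [neg_sub, add_sub_cancel] at this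
    linarith
  have h6 : |(∑ j, u.1 j * (starRingEnd ℂ) (v.1 j)).im| ≤ d * a := by
    have e := im_sum_sub v.1 u.1 v.1
    rw [im_sum_self] at e
    have := im_sum_le (v.1 - u.1) v.1
    rw [e, zero_sub, abs_neg] at this
    refine this.trans ?_
    exact mul_le_mul h1 h3 (znorm_nonneg _) hd0
  have h7 : |u.2| ≤ (a + d) ^ 2 := by
    rw [abs_le] at *
    constructor <;> nlinarith
  have h8 := Hnorm_pow u
  have h9 : znorm u.1 ^ 4 ≤ (a + d) ^ 4 := pow_le_pow_left₀ (znorm_nonneg _) h5 4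
  have h10 : u.2 ^ 2 ≤ (a + d) ^ 4 := by
    rw [← sq_abs]
    calc |u.2| ^ 2 ≤ ((a + d) ^ 2) ^ 2 := pow_le_pow_left₀ (abs_nonneg _) h7 2
      _ = _ := by ring
  have hb0 : 0 < b := by linarith
  have h11 : (a + d) ^ 4 ≤ (b / 2) ^ 4 := pow_le_pow_left₀ (by positivity) (by linarith) 4
  rw [← hb] at h8
  have : 0 < b ^ 4 := by positivity
  have e : (b / 2) ^ 4 = b ^ 4 / 16 := by ring
  linarith

lemma vol_znorm (n : ℕ) (hn : 1 ≤ n) : ∃ V : ℝ, 0 < V ∧ ∀ (z0 : Fin n → ℂ) (ρ : ℝ), 0 < ρ →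
    volume {z : Fin n → ℂ | znorm (z - z0) < ρ} ≤ ENNReal.ofReal (V * ρ ^ (2 * n : ℝ)) := by
  have : Nonempty (Fin n) := ⟨⟨0, hn⟩⟩
  set W := volume (Metric.ball (0 : Fin n → ℂ) 1)
  have hW : W ≠ ∞ := measure_ball_lt_top.ne
  refine ⟨W.toReal + 1, by positivity, fun z0 ρ hρ => ?_⟩
  calc volume {z : Fin n → ℂ | znorm (z - z0) < ρ} ≤ volume (Metric.ball z0 ρ) := by
        refine measure_mono fun z hz => ?_
        rw [Metric.mem_ball, dist_eq_norm]
        exact (norm_le_znorm _).trans_lt hz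
    _ = ENNReal.ofReal (ρ ^ (2 * n)) * W := by
        rw [Measure.addHaar_ball _ _ hρ.le, Module.finrank_pi_fintype]
        simp [W, mul_comm]
    _ ≤ ENNReal.ofReal (ρ ^ (2 * n)) * ENNReal.ofReal (W.toReal + 1) := by
        gcongr
        rw [ENNReal.ofReal_add ENNReal.toReal_nonneg zero_le_one, ENNReal.ofReal_toReal hW]
        exact le_self_add
    _ = _ := by
        rw [← ENNReal.ofReal_mul (by positivity), mul_comm]
        congr 2
        exact_mod_cast (Real.rpow_natCast ρ (2 * n)).symm



/-- auxiliary measure `|z|^{-2n} dz dt` -/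
def mz (n : ℕ) : Measure (Hn n) :=
  volume.withDensity (fun v => ENNReal.ofReal (znorm v.1 ^ (-(2 * n : ℝ))))

/-- auxiliary kernel -/
def kern {n : ℕ} (A B lam : ℝ) (u v : Hn n) : ℝ :=
  znorm u.1 ^ A * znorm v.1 ^ B * Hdist u v ^ (-lam)

lemma kern_nonneg {n : ℕ} (A B lam : ℝ) (u v : Hn n) : 0 ≤ kern A B lam u v := by
  have := znorm_nonneg u.1
  have := znorm_nonneg v.1
  have := Hdist_nonneg u v
  unfold kern; positivity

lemma kern_meas {n : ℕ} (A B lam : ℝ) :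
    Measurable (Function.uncurry (kern (n := n) A B lam)) := by
  have := Hdist_meas (n := n)
  unfold kern Function.uncurry at *
  fun_prop

lemma kern_meas2 {n : ℕ} (A B lam : ℝ) (u : Hn n) :
    Measurable fun v => kern A B lam u v := by
  have h := Measurable.of_uncurry_left (kern_meas (n := n) A B lam) (x := u)
  exact h

lemma real_aux {X δ r lam : ℝ} (hX : 0 < X) (hδ : 0 < δ) (hl : 0 < lam) (hlr : 2 < lam * r)
    (h : δ ≤ X ^ (1 / lam)) : X ^ (2 / lam) ≤ X ^ r * δ ^ (2 - lam * r) := by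
  have h1 : (X ^ (1 / lam)) ^ (2 - lam * r) ≤ δ ^ (2 - lam * r) :=
    Real.rpow_le_rpow_of_nonpos hδ h (by linarith)
  rw [← Real.rpow_mul hX.le] at h1
  calc X ^ (2 / lam) = X ^ r * X ^ (1 / lam * (2 - lam * r)) := by
        rw [← Real.rpow_add hX]; congr 1; field_simp; ring
    _ ≤ _ := by gcongr

lemma WT_mem {n : ℕ} (A B lam c : ℝ) (hl : 0 < lam) (hc : 0 < c) (u : Hn n)
    (z : Fin n → ℂ) (t : ℝ) (ht : c < kern A B lam u (z, t)) :
    znorm (z - u.1) < (znorm u.1 ^ A * znorm z ^ B / c) ^ (1 / lam) ∧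
    t ∈ Metric.ball (u.2 + 2 * (∑ j, u.1 j * (starRingEnd ℂ) (z j)).im)
      ((znorm u.1 ^ A * znorm z ^ B / c) ^ (2 / lam)) := by
  have := znorm_nonneg u.1
  have := znorm_nonneg z
  have hX0 : 0 ≤ znorm u.1 ^ A * znorm z ^ B / c := by positivity
  have hd0 : 0 ≤ Hdist u (z, t) := Hdist_nonneg _ _
  have hz1 := znorm_sub_le_Hdist u (z, t)
  have hz2 := abs_le_Hdist u (z, t)
  unfold kern at ht
  generalize Hdist u (z, t) = d at *
  have hdp : 0 < d := by
    rcases hd0.eq_or_lt with h | h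
    · rw [← h, Real.zero_rpow (by linarith), mul_zero] at ht
      linarith
    · exact h
  have h1 : d ^ lam < znorm u.1 ^ A * znorm z ^ B / c := by
    rw [Real.rpow_neg hd0, ← div_eq_mul_inv, lt_div_iff₀ (by positivity)] at ht
    rw [lt_div_iff₀ hc, mul_comm]; exact ht
  generalize znorm u.1 ^ A * znorm z ^ B / c = X at *
  have h2 : d < X ^ (1 / lam) := by
    have := Real.rpow_lt_rpow (by positivity) h1 (show 0 < 1 / lam by positivity)
    rwa [← Real.rpow_mul hd0, mul_one_div_cancel hl.ne', Real.rpow_one] at this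
  refine ⟨hz1.trans_lt h2, ?_⟩
  rw [Metric.mem_ball, Real.dist_eq]
  refine hz2.trans_lt ?_
  calc d ^ 2 < (X ^ (1 / lam)) ^ 2 := pow_lt_pow_left₀ h2 hd0 (by norm_num)
    _ = _ := by
      rw [← Real.rpow_natCast, ← Real.rpow_mul hX0]
      congr 1; push_cast; ring

lemma fub_set {n : ℕ} (w : (Fin n → ℂ) → ℝ) (hw : Measurable w) (hw0 : ∀ z, 0 ≤ w z)
    (E : Set (Hn n)) (hE : MeasurableSet E)
    (T : Set (Fin n → ℂ)) (hT : MeasurableSet T) (τ ρ : (Fin n → ℂ) → ℝ)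
    (h : ∀ z t, ((z, t) : Hn n) ∈ E → z ∈ T ∧ t ∈ Metric.ball (τ z) (ρ z)) :
    ∫⁻ v in E, ENNReal.ofReal (w v.1) ≤ ∫⁻ z in T, ENNReal.ofReal (w z * (2 * ρ z)) := by
  rw [← lintegral_indicator hE, ← lintegral_indicator hT,
    Measure.volume_eq_prod, lintegral_prod _ (by
      refine (Measurable.indicator ?_ hE).aemeasurable
      fun_prop)]
  refine lintegral_mono fun z => ?_
  calc _ ≤ ∫⁻ t, (T.indicator (fun z => ENNReal.ofReal (w z)) z) * (Metric.ball (τ z) (ρ z)).indicator 1 t := by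
        refine lintegral_mono fun t => ?_
        by_cases ht : ((z, t) : Hn n) ∈ E
        · obtain ⟨h1, h2⟩ := h z t ht
          rw [Set.indicator_of_mem ht, Set.indicator_of_mem h1, Set.indicator_of_mem h2]
          simp
        · rw [Set.indicator_of_notMem ht]; exact zero_le
    _ = _ := by
        rw [lintegral_const_mul _ (measurable_one.indicator measurableSet_ball),
          lintegral_indicator_one measurableSet_ball, Real.volume_ball]
        by_cases h : z ∈ T
        · rw [Set.indicator_of_mem h, Set.indicator_of_mem h,
            ENNReal.ofReal_mul (hw0 z)]
        · rw [Set.indicator_of_notMem h, Set.indicator_of_notMem h, zero_mul]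

lemma WT_step1 {n : ℕ} (A B lam c : ℝ) (hl : 0 < lam) (hA : 0 < A) (hB : 0 < B) (hc : 0 < c) (u : Hn n) :
    mz n {v | c < kern A B lam u v} ≤
      ∫⁻ z in {z : Fin n → ℂ | znorm (z - u.1) < (znorm u.1 ^ A * znorm z ^ B / c) ^ (1 / lam)},
        ENNReal.ofReal (znorm z ^ (-(2 * n : ℝ)) * (2 * (znorm u.1 ^ A * znorm z ^ B / c) ^ (2 / lam))) := by
  have hk : Measurable fun v => kern A B lam u v :=
    kern_meas2 A B lam u
  have hE : MeasurableSet {v | c < kern A B lam u v} := measurableSet_lt measurable_const hk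
  have hT : MeasurableSet {z : Fin n → ℂ | znorm (z - u.1) < (znorm u.1 ^ A * znorm z ^ B / c) ^ (1 / lam)} :=
    measurableSet_lt (by fun_prop) (by fun_prop)
  rw [mz, withDensity_apply _ hE]
  have h0 : ∀ z : Fin n → ℂ, 0 ≤ znorm z ^ (-(2 * n : ℝ)) := fun z => Real.rpow_nonneg (znorm_nonneg z) _
  have hm : Measurable fun z : Fin n → ℂ => znorm z ^ (-(2 * n : ℝ)) := by fun_prop
  have hh : ∀ (z : Fin n → ℂ) (t : ℝ), ((z, t) : Hn n) ∈ {v | c < kern A B lam u v} →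
    z ∈ {z : Fin n → ℂ | znorm (z - u.1) < (znorm u.1 ^ A * znorm z ^ B / c) ^ (1 / lam)} ∧
    t ∈ Metric.ball ((fun z => u.2 + 2 * (∑ j, u.1 j * (starRingEnd ℂ) (z j)).im) z)
      ((fun z => (znorm u.1 ^ A * znorm z ^ B / c) ^ (2 / lam)) z) := fun z t ht => by
    rw [Set.mem_ofPred_eq] at ht
    exact WT_mem A B lam c hl hc u z t ht
  have := fub_set (fun z => znorm z ^ (-(2 * n : ℝ))) hm h0 {v | c < kern A B lam u v} hE _ hT _ _ hh
  exact this

set_option maxHeartbeats 1000000 in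
lemma WT {n : ℕ} (hn : 1 ≤ n) (A B lam r s : ℝ) (hA : 0 < A) (hB : 0 < B) (hr : 1 < r) (hs : 0 ≤ s)
    (hABs : A + B + s = 2 * n / r) (hlam : lam = A + B + 2 / r) :
    ∃ M : ℝ, 0 < M ∧ ∀ (u : Hn n) (c : ℝ), 0 < c →
      mz n {v | c < kern A B lam u v} ≤ ENNReal.ofReal (M * c ^ (-r)) := by
  have hr0 : 0 < r := by linarith
  have hn0 : (0 : ℝ) < 2 * n := by have : (0:ℝ) < n := by exact_mod_cast hn
                                   linarith
  have hl : 0 < lam := by rw [hlam]; positivity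
  have hlr : lam * r = r * A + r * B + 2 := by rw [hlam]; field_simp
  have hrA : 0 < r * A := by positivity
  have hrB : 0 < r * B := by positivity
  have hlr2 : 2 < lam * r := by linarith
  have hrs : r * A + r * B + r * s = 2 * n := by
    have : r * (A + B + s) = 2 * n := by rw [hABs]; field_simp
    linarith
  obtain ⟨V, hV, HV⟩ := vol_znorm n hn
  have HV0 : ∀ ρ : ℝ, 0 < ρ → volume {y : Fin n → ℂ | znorm y < ρ} ≤ ENNReal.ofReal (V * ρ ^ (2 * n : ℝ)) := by
    intro ρ hρ; simpa using HV 0 ρ hρ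
  obtain ⟨C1, hC1, H1⟩ := E1_gen (Y := Fin n → ℂ) V (2 * n) (2 * n - r * B) hV hn0 (by linarith)
  obtain ⟨C2, hC2, H2⟩ := E2_gen (Y := Fin n → ℂ) V (2 * n) (2 * n + r * A) hV hn0 (by linarith)
  set M1 := 2 * C1 * 2 ^ (r * A) with hM1
  set M2 := 2 * 2 ^ (lam * r - 2) * C2 * 2 ^ (- (r * A)) with hM2
  set M3 := 2 * V * 2 ^ (2 * n : ℝ) * 3 ^ (r * s) * 2 ^ (B * r) with hM3
  refine ⟨M1 + M2 + M3, by positivity, fun u c hc => ?_⟩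
  rcases (znorm_nonneg u.1).eq_or_lt with hζ | hζ
  · have : {v : Hn n | c < kern A B lam u v} = ∅ := by
      ext v
      simp only [Set.mem_ofPred_eq, Set.mem_empty_iff_false, iff_false, not_lt, kern, ← hζ,
        Real.zero_rpow hA.ne', zero_mul]
      exact hc.le
    rw [this]; simp
  refine (WT_step1 A B lam c hl hA hB hc u).trans ?_
  set ζ := znorm u.1 with hζd
  set X : (Fin n → ℂ) → ℝ := fun z => ζ ^ A * znorm z ^ B / c with hX
  set T := {z : Fin n → ℂ | znorm (z - u.1) < X z ^ (1 / lam)}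
  have hXm : Measurable X := by simp only [hX]; fun_prop
  have hT : MeasurableSet T := measurableSet_lt (by fun_prop) (by fun_prop)
  set Φ : (Fin n → ℂ) → ℝ≥0∞ := fun z => ENNReal.ofReal (znorm z ^ (-(2 * n : ℝ)) * (2 * X z ^ (2 / lam)))
  have hTpos : ∀ z ∈ T, 0 < znorm z := by
    intro z hz
    rcases (znorm_nonneg z).eq_or_lt with h | h
    · have hz : znorm (z - u.1) < X z ^ (1 / lam) := hz
      simp only [hX, ← h, Real.zero_rpow hB.ne', mul_zero, zero_div] at hz
      rw [Real.zero_rpow (by positivity)] at hz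
      exact absurd hz (not_lt.2 (znorm_nonneg _))
    · exact h
  have hXr : ∀ z, 0 < znorm z → X z ^ r = ζ ^ (r * A) * znorm z ^ (r * B) * c ^ (-r) := by
    intro z hz
    simp only [hX]
    rw [Real.div_rpow (by positivity) hc.le, Real.mul_rpow (by positivity) (by positivity),
      ← Real.rpow_mul hζ.le, ← Real.rpow_mul hz.le, Real.rpow_neg hc.le, mul_comm A, mul_comm B]
    rfl
  set R1 := {z : Fin n → ℂ | znorm z < ζ / 2}
  set R2 := {z : Fin n → ℂ | 2 * ζ ≤ znorm z}
  set R3 := {z : Fin n → ℂ | ζ / 2 ≤ znorm z ∧ znorm z < 2 * ζ}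
  have hR1 : MeasurableSet R1 := measurableSet_lt (by fun_prop) (by fun_prop)
  have hR2 : MeasurableSet R2 := measurableSet_le (by fun_prop) (by fun_prop)
  have hR3a : MeasurableSet {z : Fin n → ℂ | ζ / 2 ≤ znorm z} := measurableSet_le (by fun_prop) (by fun_prop)
  have hR3b : MeasurableSet {z : Fin n → ℂ | znorm z < 2 * ζ} := measurableSet_lt (by fun_prop) (by fun_prop)
  have hR3 : MeasurableSet R3 := hR3a.inter hR3b
  have hcov : T ⊆ (T ∩ R1 ∪ T ∩ R2) ∪ T ∩ R3 := by
    intro z hz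
    by_cases h1 : znorm z < ζ / 2
    · exact Or.inl (Or.inl ⟨hz, h1⟩)
    by_cases h2 : 2 * ζ ≤ znorm z
    · exact Or.inl (Or.inr ⟨hz, h2⟩)
    · exact Or.inr ⟨hz, not_lt.1 h1, not_le.1 h2⟩
  have tri1 : ∀ z : Fin n → ℂ, ζ ≤ znorm z + znorm (z - u.1) := by
    intro z
    have := znorm_add_le z (-(z - u.1))
    rw [znorm_neg] at this
    simpa using this
  have tri2 : ∀ z : Fin n → ℂ, znorm z ≤ ζ + znorm (z - u.1) := by
    intro z
    have := znorm_add_le u.1 (z - u.1)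
    simpa using this
  have tri3 : ∀ z : Fin n → ℂ, znorm (z - u.1) ≤ znorm z + ζ := by
    intro z
    have := znorm_add_le z (-u.1)
    rw [znorm_neg] at this
    simpa [sub_eq_add_neg] using this
  have b1 : ∫⁻ z in T ∩ R1, Φ z ≤ ENNReal.ofReal (M1 * c ^ (-r)) := by
    calc _ ≤ ∫⁻ z in T ∩ R1, ENNReal.ofReal (2 * ζ ^ (r * A) * c ^ (-r) * (ζ / 2) ^ (2 - lam * r)) *
            ENNReal.ofReal (znorm z ^ (-(2 * n - r * B))) := by
          refine setLIntegral_mono' (hT.inter hR1) fun z hz => ?_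
          have hx := hTpos z hz.1
          have hz1 : znorm (z - u.1) < X z ^ (1 / lam) := hz.1
          have hz2 : znorm z < ζ / 2 := hz.2
          have hXp : 0 < X z := by simp only [hX]; positivity
          have := real_aux hXp (show 0 < ζ / 2 by positivity) hl hlr2 (by linarith [tri1 z])
          rw [← ENNReal.ofReal_mul (by positivity)]
          refine ENNReal.ofReal_le_ofReal ?_
          calc _ ≤ znorm z ^ (-(2 * n : ℝ)) * (2 * (X z ^ r * (ζ / 2) ^ (2 - lam * r))) := by gcongr
            _ = _ := by
              rw [hXr z hx, show -(2 * n - r * B) = -(2 * n : ℝ) + r * B by ring, Real.rpow_add hx]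
              ring
      _ ≤ ∫⁻ z in R1, ENNReal.ofReal (2 * ζ ^ (r * A) * c ^ (-r) * (ζ / 2) ^ (2 - lam * r)) *
            ENNReal.ofReal (znorm z ^ (-(2 * n - r * B))) := lintegral_mono_set Set.inter_subset_right
      _ ≤ ENNReal.ofReal (2 * ζ ^ (r * A) * c ^ (-r) * (ζ / 2) ^ (2 - lam * r)) *
            ENNReal.ofReal (C1 * (ζ / 2) ^ (2 * n - (2 * n - r * B))) := by
          rw [lintegral_const_mul _ (by fun_prop)]
          gcongr
          exact H1 volume znorm znorm_meas znorm_nonneg HV0 (ζ / 2) (by positivity)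
      _ = _ := by
          rw [← ENNReal.ofReal_mul (by positivity)]
          congr 1
          have e : (ζ / 2) ^ (2 - lam * r) * (ζ / 2) ^ (2 * n - (2 * n - r * B)) = (ζ ^ (r * A))⁻¹ * 2 ^ (r * A) := by
            rw [← Real.rpow_add (by positivity), show 2 - lam * r + (2 * n - (2 * n - r * B)) = -(r * A) by rw [hlr]; ring,
              Real.div_rpow hζ.le (by norm_num), Real.rpow_neg hζ.le, Real.rpow_neg (by norm_num)]
            field_simp
          calc _ = 2 * C1 * c ^ (-r) * ζ ^ (r * A) * ((ζ / 2) ^ (2 - lam * r) * (ζ / 2) ^ (2 * n - (2 * n - r * B))) := by ring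
            _ = _ := by rw [e, hM1]; field_simp
  have b2 : ∫⁻ z in T ∩ R2, Φ z ≤ ENNReal.ofReal (M2 * c ^ (-r)) := by
    calc _ ≤ ∫⁻ z in T ∩ R2, ENNReal.ofReal (2 * 2 ^ (lam * r - 2) * ζ ^ (r * A) * c ^ (-r)) *
            ENNReal.ofReal (znorm z ^ (-(2 * n + r * A))) := by
          refine setLIntegral_mono' (hT.inter hR2) fun z hz => ?_
          have hx := hTpos z hz.1
          have hz1 : znorm (z - u.1) < X z ^ (1 / lam) := hz.1
          have hz2 : 2 * ζ ≤ znorm z := hz.2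
          have hXp : 0 < X z := by simp only [hX]; positivity
          have := real_aux hXp (show 0 < znorm z / 2 by positivity) hl hlr2 (by linarith [tri2 z])
          rw [← ENNReal.ofReal_mul (by positivity)]
          refine ENNReal.ofReal_le_ofReal ?_
          calc _ ≤ znorm z ^ (-(2 * n : ℝ)) * (2 * (X z ^ r * (znorm z / 2) ^ (2 - lam * r))) := by gcongr
            _ = _ := by
              rw [hXr z hx, show -(2 * n + r * A) = -(2 * n : ℝ) + r * B + (2 - lam * r) by rw [hlr]; ring,
                Real.rpow_add hx, Real.rpow_add hx, Real.div_rpow hx.le (by norm_num),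
                show lam * r - 2 = -(2 - lam * r) by ring, Real.rpow_neg (by norm_num) (2 - lam * r)]
              field_simp
      _ ≤ ∫⁻ z in R2, ENNReal.ofReal (2 * 2 ^ (lam * r - 2) * ζ ^ (r * A) * c ^ (-r)) *
            ENNReal.ofReal (znorm z ^ (-(2 * n + r * A))) := lintegral_mono_set Set.inter_subset_right
      _ ≤ ENNReal.ofReal (2 * 2 ^ (lam * r - 2) * ζ ^ (r * A) * c ^ (-r)) *
            ENNReal.ofReal (C2 * (2 * ζ) ^ (2 * n - (2 * n + r * A))) := by
          rw [lintegral_const_mul _ (by fun_prop)]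
          gcongr
          exact H2 volume znorm znorm_meas znorm_nonneg HV0 (2 * ζ) (by positivity)
      _ = _ := by
          rw [← ENNReal.ofReal_mul (by positivity)]
          congr 1
          rw [show (2 * n - (2 * n + r * A)) = -(r * A) by ring,
              Real.mul_rpow (by norm_num) hζ.le, Real.rpow_neg hζ.le, hM2]
          field_simp
  have b3 : ∫⁻ z in T ∩ R3, Φ z ≤ ENNReal.ofReal (M3 * c ^ (-r)) := by
    set Y := 2 ^ B * ζ ^ (A + B) / c with hY
    have hY0 : 0 < Y := by positivity
    set m := min (Y ^ (1 / lam)) (3 * ζ) with hm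
    have hm0 : 0 < m := lt_min (by positivity) (by positivity)
    have hXY : ∀ z ∈ R3, X z ≤ Y := by
      intro z hz
      simp only [hX, hY]
      rw [Real.rpow_add hζ]
      have : znorm z ^ B ≤ (2 * ζ) ^ B := Real.rpow_le_rpow (znorm_nonneg z) hz.2.le hB.le
      rw [Real.mul_rpow (by norm_num) hζ.le] at this
      calc ζ ^ A * znorm z ^ B / c ≤ ζ ^ A * (2 ^ B * ζ ^ B) / c := by gcongr
        _ = _ := by ring
    calc _ ≤ ∫⁻ z in T ∩ R3, ENNReal.ofReal ((ζ / 2) ^ (-(2 * n : ℝ)) * (2 * Y ^ (2 / lam))) := by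
          refine setLIntegral_mono' (hT.inter hR3) fun z hz => ?_
          have hx := hTpos z hz.1
          have hXp : 0 < X z := by simp only [hX]; positivity
          refine ENNReal.ofReal_le_ofReal ?_
          have h1 : znorm z ^ (-(2 * n : ℝ)) ≤ (ζ / 2) ^ (-(2 * n : ℝ)) :=
            Real.rpow_le_rpow_of_nonpos (by positivity) hz.2.1 (by linarith)
          have h2 := hXY z hz.2
          gcongr
      _ ≤ ENNReal.ofReal ((ζ / 2) ^ (-(2 * n : ℝ)) * (2 * Y ^ (2 / lam))) * ENNReal.ofReal (V * m ^ (2 * n : ℝ)) := by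
          rw [setLIntegral_const]
          gcongr
          refine (measure_mono fun z hz => ?_).trans (HV u.1 m hm0)
          have hz1 : znorm (z - u.1) < X z ^ (1 / lam) := hz.1
          have hx := hTpos z hz.1
          have hXp : 0 < X z := by simp only [hX]; positivity
          refine lt_min (hz1.trans_le (Real.rpow_le_rpow hXp.le (hXY z hz.2) (by positivity))) ?_
          linarith [tri3 z, hz.2.2]
      _ ≤ ENNReal.ofReal ((ζ / 2) ^ (-(2 * n : ℝ)) * (2 * Y ^ (2 / lam)) * (V * ((Y ^ (1 / lam)) ^ (2 * n - r * s) * (3 * ζ) ^ (r * s)))) := by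
          rw [← ENNReal.ofReal_mul (by positivity)]
          refine ENNReal.ofReal_le_ofReal ?_
          have : m ^ (2 * n : ℝ) ≤ (Y ^ (1 / lam)) ^ (2 * n - r * s) * (3 * ζ) ^ (r * s) := by
            rw [show (2 * n : ℝ) = (2 * n - r * s) + r * s by ring, Real.rpow_add hm0,
              show (2 * n - r * s) + r * s - r * s = (2 * n - r * s) by ring]
            have h1 : m ≤ Y ^ (1 / lam) := min_le_left _ _
            have h2 : m ≤ 3 * ζ := min_le_right _ _
            have h3 : 0 ≤ 2 * n - r * s := by linarith
            have h4 : 0 ≤ r * s := by positivity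
            gcongr
          gcongr
      _ = _ := by
          congr 1
          have e1 : Y ^ (2 / lam) * (Y ^ (1 / lam)) ^ (2 * n - r * s) = 2 ^ (B * r) * ζ ^ (r * A + r * B) * c ^ (-r) := by
            rw [← Real.rpow_mul hY0.le, ← Real.rpow_add hY0,
              show 2 / lam + 1 / lam * (2 * n - r * s) = r by
                field_simp; linarith,
              hY, Real.div_rpow (by positivity) hc.le, Real.mul_rpow (by positivity) (by positivity),
              ← Real.rpow_mul (by norm_num), ← Real.rpow_mul hζ.le, Real.rpow_neg hc.le,
              show (A + B) * r = r * A + r * B by ring]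
            rfl
          have e2 : ζ ^ (-(2 * n : ℝ)) * ζ ^ (r * s) * ζ ^ (r * A + r * B) = 1 := by
            rw [← Real.rpow_add hζ, ← Real.rpow_add hζ,
              show (-(2 * n : ℝ)) + r * s + (r * A + r * B) = 0 by linarith, Real.rpow_zero]
          rw [Real.div_rpow hζ.le (by norm_num), Real.mul_rpow (by norm_num) hζ.le]
          calc _ = 2 * V * (1 / 2 ^ (-(2 * n : ℝ))) * 3 ^ (r * s) * (Y ^ (2 / lam) * (Y ^ (1 / lam)) ^ (2 * n - r * s)) * (ζ ^ (-(2 * n : ℝ)) * ζ ^ (r * s)) := by ring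
            _ = 2 * V * (1 / 2 ^ (-(2 * n : ℝ))) * 3 ^ (r * s) * (2 ^ (B * r)  * c ^ (-r)) * (ζ ^ (-(2 * n : ℝ)) * ζ ^ (r * s) * ζ ^ (r * A + r * B)) := by rw [e1]; ring
            _ = _ := by rw [e2, Real.rpow_neg (by norm_num), hM3]; field_simp
  calc ∫⁻ z in T, Φ z ≤ ∫⁻ z in (T ∩ R1 ∪ T ∩ R2) ∪ T ∩ R3, Φ z := lintegral_mono_set hcov
    _ ≤ ((∫⁻ z in T ∩ R1, Φ z) + (∫⁻ z in T ∩ R2, Φ z)) + (∫⁻ z in T ∩ R3, Φ z) :=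
        (lintegral_union_le _ _ _).trans (add_le_add (lintegral_union_le _ _ _) le_rfl)
    _ ≤ (ENNReal.ofReal (M1 * c ^ (-r)) + ENNReal.ofReal (M2 * c ^ (-r))) + ENNReal.ofReal (M3 * c ^ (-r)) :=
        add_le_add (add_le_add b1 b2) b3
    _ = _ := by
        rw [← ENNReal.ofReal_add (by positivity) (by positivity),
          ← ENNReal.ofReal_add (by positivity) (by positivity)]
        congr 1; ring



/-- lower-integral version of the fractional integral -/
def Jl {n : ℕ} (lam : ℝ) (g : Hn n → ℝ) (u : Hn n) : ℝ≥0∞ :=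
  ∫⁻ v, ENNReal.ofReal (g v) * ENNReal.ofReal (Hdist u v ^ (-lam))

lemma ae_fst_ne {n : ℕ} (hn : 1 ≤ n) : ∀ᵐ v : Hn n, v.1 ≠ 0 := by
  have : Nonempty (Fin n) := ⟨⟨0, hn⟩⟩
  have h : ∀ᵐ z : Fin n → ℂ, z ≠ 0 := by
    rw [ae_iff]; simp
  rw [Measure.volume_eq_prod]
  exact Measure.quasiMeasurePreserving_fst.ae h

lemma Jl_meas {n : ℕ} (lam : ℝ) (g : Hn n → ℝ) (hg : Measurable g) : Measurable (Jl lam g) := by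
  unfold Jl
  have h : Measurable fun x : Hn n × Hn n => Hdist x.1 x.2 := Hdist_meas
  refine Measurable.lintegral_prod_right' (f := fun x : Hn n × Hn n => ENNReal.ofReal (g x.2) * ENNReal.ofReal (Hdist x.1 x.2 ^ (-lam))) ?_
  have h2 : Measurable fun x : Hn n × Hn n => g x.2 := hg.comp measurable_snd
  fun_prop

lemma zp_meas {n : ℕ} (a : ℝ) : Measurable fun v : Hn n => znorm v.1 ^ a := by fun_prop

lemma sf_aux {X : Type*} [MeasurableSpace X] (μ : Measure X) [SigmaFinite μ] (f : X → ℝ) :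
    SigmaFinite (μ.withDensity fun x => ENNReal.ofReal (f x)) := SigmaFinite.withDensity_ofReal f

instance mz_sf (n : ℕ) : SigmaFinite (mz n) := by
  have hv : SigmaFinite (volume : Measure (Hn n)) := by
    rw [Measure.volume_eq_prod]; infer_instance
  exact @sf_aux (Hn n) _ volume hv fun v : Hn n => znorm v.1 ^ (-(2 * n : ℝ))

lemma SW_bound (n : ℕ) (hn : 1 ≤ n) (p p' q q' lam α β : ℝ)
    (hp : 1 < p) (hq' : 1 < q')
    (hq : 1 / q + 1 / q' = 1) (hp' : 1 / p + 1 / p' = 1) (hq0 : 0 < q) (hp0 : 0 < p')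
    (hab : 0 ≤ α + β)
    (hβ : β < 2 * n / p') (hα : α < 2 * n / q)
    (hbal : lam + α + β = (2 * n + 2) * (1 / q + 1 / p'))
    (hpq : p < q) :
    ∃ D : ℝ, 0 < D ∧ ∀ g : Hn n → ℝ, Measurable g → (∀ v, 0 ≤ g v) →
      ∫⁻ v, ENNReal.ofReal ((g v * znorm v.1 ^ β) ^ p) ≤ 1 →
      ∫⁻ u, (ENNReal.ofReal (znorm u.1 ^ (-α)) * Jl lam g u) ^ q ≤ ENNReal.ofReal D := by
  set r := 1 / (1 / q + 1 / p') with hr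
  have hrinv : 1 / r = 1 / q + 1 / p' := by rw [hr]; simp
  have hpos : 0 < 1 / q + 1 / p' := by positivity
  have hlt1 : 1 / q + 1 / p' < 1 := by
    have : 1 / q < 1 / p := one_div_lt_one_div_of_lt (by linarith) hpq
    linarith
  have hr1 : 1 < r := by rw [hr, lt_div_iff₀ hpos]; linarith
  have hr0 : 0 < r := by linarith
  set A := 2 * n / q - α with hA
  set B := 2 * n / p' - β with hB
  have e1 : A + B + (α + β) = 2 * n / r := by
    rw [div_eq_mul_one_div (2 * n : ℝ) r, hrinv, hA, hB]; ring
  have e2 : lam = A + B + 2 / r := by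
    rw [div_eq_mul_one_div (2 : ℝ) r, hrinv, hA, hB]
    have : lam = (2 * n + 2) * (1 / q + 1 / p') - α - β := by linarith
    rw [this]; ring
  obtain ⟨M1, hM1, H1⟩ := WT hn A B lam r (α + β) (by linarith) (by linarith) hr1 hab e1 e2
  obtain ⟨M2, hM2, H2⟩ := WT hn B A lam r (α + β) (by linarith) (by linarith) hr1 hab (by linarith) (by linarith)
  have hsw : ∀ u v : Hn n, kern A B lam u v = kern B A lam v u := by
    intro u v; unfold kern; rw [Hdist_comm]; ring
  obtain ⟨D, hD, H⟩ := weak_young (mz n) (mz n) (kern A B lam) (kern_meas A B lam) (kern_nonneg A B lam) p q q' r (M1 + M2)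
    hp hq' hr1 (by positivity) hq (by linarith)
    (fun x c hc => (H1 x c hc).trans (by gcongr; linarith))
    (fun y c hc => by
      simp only [hsw]
      exact (H2 y c hc).trans (by gcongr; linarith))
  refine ⟨D, hD, fun g hg hg0 hgp => ?_⟩
  have hwm : Measurable fun v : Hn n => ENNReal.ofReal (znorm v.1 ^ (-(2 * n : ℝ))) := by fun_prop
  have h := H (fun v => g v * znorm v.1 ^ (β + 2 * n / p)) (by fun_prop)
    (fun v => mul_nonneg (hg0 v) (Real.rpow_nonneg (znorm_nonneg _) _)) ?_
  · refine le_trans (le_of_eq ?_) h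
    have hin : ∀ u : Hn n, (∫⁻ y, ENNReal.ofReal (g y * znorm y.1 ^ (β + 2 * n / p)) * ENNReal.ofReal (kern A B lam u y) ∂ mz n)
        = ENNReal.ofReal (znorm u.1 ^ A) * Jl lam g u := by
      intro u
      have hk := kern_meas2 A B lam u
      have hd : Measurable fun v => Hdist u v := Measurable.of_uncurry_left Hdist_meas
      rw [mz, lintegral_withDensity_eq_lintegral_mul _ hwm (by fun_prop), Jl, ← lintegral_const_mul _ (by fun_prop)]
      refine lintegral_congr_ae ?_
      filter_upwards [ae_fst_ne hn] with v hv
      have hz := znorm_pos hv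
      have hu := znorm_nonneg u.1
      have hdn := Hdist_nonneg u v
      simp only [Pi.mul_apply]
      rw [← ENNReal.ofReal_mul (mul_nonneg (hg0 v) (Real.rpow_nonneg (znorm_nonneg _) _)),
        ← ENNReal.ofReal_mul (by positivity), ← ENNReal.ofReal_mul (hg0 v),
        ← ENNReal.ofReal_mul (by positivity)]
      congr 1
      unfold kern
      have : znorm v.1 ^ (-(2 * n : ℝ)) * znorm v.1 ^ (β + 2 * n / p) * znorm v.1 ^ B = 1 := by
        rw [← Real.rpow_add hz, ← Real.rpow_add hz]
        have : -(2 * n : ℝ) + (β + 2 * n / p) + B = 2 * n * (1 / p + 1 / p' - 1) := by rw [hB]; ring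
        rw [this, hp']; simp
      calc _ = (znorm v.1 ^ (-(2 * n : ℝ)) * znorm v.1 ^ (β + 2 * n / p) * znorm v.1 ^ B) * (znorm u.1 ^ A * (g v * Hdist u v ^ (-lam))) := by ring
        _ = _ := by rw [this, one_mul]
    simp only [hin]
    have hJ := Jl_meas lam g hg
    rw [mz, lintegral_withDensity_eq_lintegral_mul _ hwm (by fun_prop)]
    refine lintegral_congr_ae ?_
    filter_upwards [ae_fst_ne hn] with u hv
    have hz := znorm_pos hv
    simp only [Pi.mul_apply]
    rw [ENNReal.mul_rpow_of_nonneg _ _ hq0.le, ENNReal.mul_rpow_of_nonneg _ _ hq0.le, ← mul_assoc,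
      ENNReal.ofReal_rpow_of_nonneg (by positivity) hq0.le, ENNReal.ofReal_rpow_of_nonneg (by positivity) hq0.le,
      ← ENNReal.ofReal_mul (by positivity), ← Real.rpow_mul hz.le, ← Real.rpow_mul hz.le, ← Real.rpow_add hz]
    congr 3
    rw [hA]; field_simp; ring
  · refine le_trans (le_of_eq ?_) hgp
    rw [mz, lintegral_withDensity_eq_lintegral_mul _ hwm (by fun_prop)]
    refine lintegral_congr_ae ?_
    filter_upwards [ae_fst_ne hn] with v hv
    have hz := znorm_pos hv
    have := hg0 v
    simp only [Pi.mul_apply]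
    rw [← ENNReal.ofReal_mul (by positivity)]
    congr 1
    rw [Real.mul_rpow (hg0 v) (by positivity), Real.mul_rpow (hg0 v) (by positivity), ← Real.rpow_mul hz.le, ← Real.rpow_mul hz.le,
      mul_left_comm, ← Real.rpow_add hz]
    congr 2
    field_simp; ring



lemma Hset_lt {n : ℕ} (ρ : ℝ) : MeasurableSet {v : Hn n | Hnorm v < ρ} :=
  measurableSet_lt Hnorm_meas measurable_const

lemma Hset_le {n : ℕ} (ρ : ℝ) : MeasurableSet {v : Hn n | ρ ≤ Hnorm v} :=
  measurableSet_le measurable_const Hnorm_meas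

lemma lem_in (n : ℕ) (hn : 1 ≤ n) (a : ℝ) (ha : a < 2 * n) :
    ∃ C : ℝ, 0 < C ∧ ∀ ρ : ℝ, 0 < ρ →
      ∫⁻ v in {v : Hn n | Hnorm v < ρ}, ENNReal.ofReal (znorm v.1 ^ (-a)) ≤
        ENNReal.ofReal (C * ρ ^ (2 * n + 2 - a)) := by
  have hn0 : (0 : ℝ) < 2 * n := by have : (0:ℝ) < n := by exact_mod_cast hn
                                   linarith
  obtain ⟨V, hV, HV⟩ := vol_znorm n hn
  have HV0 : ∀ ρ : ℝ, 0 < ρ → volume {y : Fin n → ℂ | znorm y < ρ} ≤ ENNReal.ofReal (V * ρ ^ (2 * n : ℝ)) := by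
    intro ρ hρ; simpa using HV 0 ρ hρ
  obtain ⟨C1, hC1, H1⟩ := E1_gen (Y := Fin n → ℂ) V (2 * n) a hV hn0 ha
  refine ⟨2 * C1, by positivity, fun ρ hρ => ?_⟩
  have hT : MeasurableSet {z : Fin n → ℂ | znorm z < ρ} := measurableSet_lt (by fun_prop) (by fun_prop)
  have hwm : Measurable fun z : Fin n → ℂ => znorm z ^ (-a) := by fun_prop
  have h1 := fub_set (n := n) (fun z => znorm z ^ (-a)) hwm (fun z => Real.rpow_nonneg (znorm_nonneg z) _)
    _ (Hset_lt ρ) _ hT (fun _ => 0) (fun _ => ρ ^ 2) (fun z t ht => by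
      have ht : Hnorm (z, t) < ρ := ht
      refine ⟨(znorm_le_Hnorm (z, t)).trans_lt ht, ?_⟩
      rw [Metric.mem_ball, Real.dist_eq, sub_zero]
      exact (abs_le_Hnorm (z, t)).trans_lt (pow_lt_pow_left₀ ht (Hnorm_nonneg _) (by norm_num)))
  refine h1.trans ?_
  calc ∫⁻ z in {z : Fin n → ℂ | znorm z < ρ}, ENNReal.ofReal (znorm z ^ (-a) * (2 * ρ ^ 2))
      = ∫⁻ z in {z : Fin n → ℂ | znorm z < ρ}, ENNReal.ofReal (2 * ρ ^ 2) * ENNReal.ofReal (znorm z ^ (-a)) := by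
        refine lintegral_congr fun z => ?_
        rw [← ENNReal.ofReal_mul (by positivity), mul_comm]
    _ ≤ ENNReal.ofReal (2 * ρ ^ 2) * ENNReal.ofReal (C1 * ρ ^ (2 * n - a)) := by
        rw [lintegral_const_mul _ (by fun_prop)]
        gcongr
        exact H1 volume znorm znorm_meas znorm_nonneg HV0 ρ hρ
    _ = _ := by
        rw [← ENNReal.ofReal_mul (by positivity)]
        congr 1
        rw [show (2 * n + 2 - a : ℝ) = (2 * n - a) + (2 : ℕ) by push_cast; ring, Real.rpow_add hρ, Real.rpow_natCast]
        ring

lemma lem_out (n : ℕ) (hn : 1 ≤ n) (a b : ℝ) (ha : a < 2 * n) (hb : 2 * n + 2 - a < b) :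
    ∃ C : ℝ, 0 < C ∧ ∀ ρ : ℝ, 0 < ρ →
      ∫⁻ v in {v : Hn n | ρ ≤ Hnorm v}, ENNReal.ofReal (znorm v.1 ^ (-a)) * ENNReal.ofReal (Hnorm v ^ (-b)) ≤
        ENNReal.ofReal (C * ρ ^ (2 * n + 2 - a - b)) := by
  obtain ⟨V, hV, HV⟩ := lem_in n hn a ha
  obtain ⟨C, hC, H⟩ := E2_gen (Y := Hn n) V (2 * n + 2 - a) b hV (by linarith) hb
  refine ⟨C, hC, fun ρ hρ => ?_⟩
  have hwm : Measurable fun v : Hn n => ENNReal.ofReal (znorm v.1 ^ (-a)) := by fun_prop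
  have hbm : Measurable fun v : Hn n => ENNReal.ofReal (Hnorm v ^ (-b)) := by fun_prop
  have h := H (volume.withDensity fun v : Hn n => ENNReal.ofReal (znorm v.1 ^ (-a))) Hnorm Hnorm_meas Hnorm_nonneg
    (fun ρ hρ => by
      rw [withDensity_apply _ (Hset_lt ρ)]
      exact HV ρ hρ) ρ hρ
  rw [restrict_withDensity (Hset_le ρ), lintegral_withDensity_eq_lintegral_mul _ hwm hbm] at h
  exact h

lemma holder_w (n : ℕ) (hn : 1 ≤ n) (p p' β : ℝ) (hp : 1 < p) (hp' : 1 / p + 1 / p' = 1) (hp0 : 0 < p')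
    (g : Hn n → ℝ) (hg : Measurable g) (hg0 : ∀ v, 0 ≤ g v)
    (h : Hn n → ℝ) (hh : Measurable h) (hh0 : ∀ v, 0 ≤ h v) (S : Set (Hn n)) (B : ℝ≥0∞)
    (hP : ∫⁻ v, ENNReal.ofReal ((g v * znorm v.1 ^ β) ^ p) ≤ 1)
    (hB : ∫⁻ v in S, ENNReal.ofReal (znorm v.1 ^ (-(β * p'))) * ENNReal.ofReal (h v ^ p') ≤ B) :
    ∫⁻ v in S, ENNReal.ofReal (g v) * ENNReal.ofReal (h v) ≤ B ^ (1 / p') := by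
  have hpq : p.HolderConjugate p' := by
    rw [Real.holderConjugate_iff]; exact ⟨hp, by simpa using hp'⟩
  have H := ENNReal.lintegral_mul_le_Lp_mul_Lq (volume.restrict S) hpq
    (f := fun v => ENNReal.ofReal (g v * znorm v.1 ^ β)) (g := fun v => ENNReal.ofReal (znorm v.1 ^ (-β) * h v))
    (by fun_prop) (by fun_prop)
  have hA : (∫⁻ v in S, (ENNReal.ofReal (g v * znorm v.1 ^ β)) ^ p) ≤ 1 := by
    refine (setLIntegral_le_lintegral _ _).trans ?_
    refine le_trans (le_of_eq (lintegral_congr fun v => ?_)) hP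
    rw [ENNReal.ofReal_rpow_of_nonneg (mul_nonneg (hg0 v) (Real.rpow_nonneg (znorm_nonneg _) _)) (by linarith)]
  have hB' : (∫⁻ v in S, (ENNReal.ofReal (znorm v.1 ^ (-β) * h v)) ^ p') ≤ B := by
    refine le_trans (le_of_eq (lintegral_congr fun v => ?_)) hB
    have := Real.rpow_nonneg (znorm_nonneg v.1) (-β)
    rw [ENNReal.ofReal_rpow_of_nonneg (mul_nonneg this (hh0 v)) hp0.le,
      Real.mul_rpow this (hh0 v), ← Real.rpow_mul (znorm_nonneg _), ENNReal.ofReal_mul (Real.rpow_nonneg (znorm_nonneg _) _), neg_mul]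
  calc _ = ∫⁻ v in S, ((fun v => ENNReal.ofReal (g v * znorm v.1 ^ β)) * (fun v => ENNReal.ofReal (znorm v.1 ^ (-β) * h v))) v := by
        refine lintegral_congr_ae ?_
        filter_upwards [ae_restrict_of_ae (ae_fst_ne hn)] with v hv
        have hz := znorm_pos hv
        have := hg0 v
        simp only [Pi.mul_apply]
        rw [← ENNReal.ofReal_mul (hg0 v), ← ENNReal.ofReal_mul (by positivity), Real.rpow_neg hz.le]
        congr 1; field_simp
    _ ≤ _ := H
    _ ≤ 1 ^ (1 / p) * B ^ (1 / p') := by gcongr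
    _ = _ := by simp

lemma four_div {d x lam : ℝ} (hl : 0 < lam) (hx : 0 < x) (h : x / 4 ≤ d) : d ^ (-lam) ≤ 4 ^ lam * x ^ (-lam) := by
  calc d ^ (-lam) ≤ (x / 4) ^ (-lam) := Real.rpow_le_rpow_of_nonpos (by positivity) h (by linarith)
    _ = _ := by
      rw [Real.div_rpow hx.le (by norm_num), Real.rpow_neg (by norm_num : (0:ℝ) ≤ 4) lam]
      field_simp

lemma off1 (n : ℕ) (hn : 1 ≤ n) (p p' q lam α β : ℝ)
    (hp : 1 < p) (hp' : 1 / p + 1 / p' = 1) (hq0 : 0 < q) (hp0 : 0 < p') (hl : 0 < lam)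
    (hβ : β < 2 * n / p') (hα : α < 2 * n / q)
    (hbal : lam + α + β = (2 * n + 2) * (1 / q + 1 / p')) :
    ∃ D : ℝ, ∃ σ : ℝ, 0 < D ∧ 0 < σ ∧ ∀ ρ r : ℝ, 4 ≤ ρ → 0 < r → ∀ g : Hn n → ℝ, Measurable g → (∀ v, 0 ≤ g v) →
      ∫⁻ v, ENNReal.ofReal ((g v * znorm v.1 ^ β) ^ p) ≤ 1 →
      (∀ v, r ≤ Hnorm v → g v = 0) →
      ∫⁻ u in {u | ρ * r ≤ Hnorm u}, (ENNReal.ofReal (znorm u.1 ^ (-α)) * Jl lam g u) ^ q ≤ ENNReal.ofReal (D * ρ ^ (-σ)) := by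
  have hn0 : (0 : ℝ) < 2 * n := by have : (0:ℝ) < n := by exact_mod_cast hn
                                   linarith
  have hβ' : β * p' < 2 * n := by rwa [lt_div_iff₀ hp0] at hβ
  have hα' : α * q < 2 * n := by rwa [lt_div_iff₀ hq0] at hα
  have hkey : lam * q + α * q - (2 * n + 2) = ((2 * n + 2) - β * p') * (q / p') := by
    have : lam = (2 * n + 2) * (1 / q + 1 / p') - α - β := by linarith
    rw [this]; field_simp; ring
  have hσ : 0 < ((2 * n + 2) - β * p') * (q / p') := mul_pos (by linarith) (by positivity)
  obtain ⟨C1, hC1, H1⟩ := lem_in n hn (β * p') hβ'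
  obtain ⟨C2, hC2, H2⟩ := lem_out n hn (α * q) (lam * q) hα' (by linarith)
  refine ⟨C1 ^ (q / p') * 4 ^ (lam * q) * C2, lam * q + α * q - (2 * n + 2), by positivity, by linarith, ?_⟩
  intro ρ r hρ hr g hg hg0 hgP hgs
  have hρ0 : 0 < ρ := by linarith
  set I := ENNReal.ofReal (C1 * r ^ (2 * n + 2 - β * p')) ^ (1 / p') with hI
  have hJ : ∀ u : Hn n, ρ * r ≤ Hnorm u → Jl lam g u ≤ ENNReal.ofReal (4 ^ lam * Hnorm u ^ (-lam)) * I := by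
    intro u hu
    have hu0 : 0 < Hnorm u := lt_of_lt_of_le (by positivity) hu
    have h1 := holder_w n hn p p' β hp hp' hp0 g hg hg0 (fun _ => 1) measurable_const (fun _ => zero_le_one) {v | Hnorm v < r} _ hgP
      (by simpa using H1 r hr)
    refine le_trans ?_ (mul_le_mul_right h1 _)
    rw [← lintegral_const_mul _ (by fun_prop), ← lintegral_indicator (Hset_lt r), Jl]
    refine lintegral_mono fun v => ?_
    by_cases hv : Hnorm v < r
    · rw [Set.indicator_of_mem (show v ∈ {v : Hn n | Hnorm v < r} from hv), ENNReal.ofReal_one, mul_one, mul_comm]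
      gcongr
      refine four_div hl hu0 (Hdist_lower u v ?_)
      nlinarith
    · rw [hgs v (not_lt.1 hv)]; simp
  calc _ ≤ ∫⁻ u in {u : Hn n | ρ * r ≤ Hnorm u}, (ENNReal.ofReal (4 ^ (lam * q)) * I ^ q) *
        (ENNReal.ofReal (znorm u.1 ^ (-(α * q))) * ENNReal.ofReal (Hnorm u ^ (-(lam * q)))) := by
        refine setLIntegral_mono' (Hset_le _) fun u hu => ?_
        have hz := Real.rpow_nonneg (znorm_nonneg u.1) (-α)
        have hh := Real.rpow_nonneg (Hnorm_nonneg u) (-lam)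
        calc _ ≤ (ENNReal.ofReal (znorm u.1 ^ (-α)) * (ENNReal.ofReal (4 ^ lam * Hnorm u ^ (-lam)) * I)) ^ q := by
              gcongr; exact hJ u hu
          _ = _ := by
              rw [ENNReal.ofReal_mul (by positivity)]
              simp only [ENNReal.mul_rpow_of_nonneg _ _ hq0.le]
              rw [ENNReal.ofReal_rpow_of_nonneg hz hq0.le, ENNReal.ofReal_rpow_of_nonneg hh hq0.le,
                ENNReal.ofReal_rpow_of_nonneg (by positivity) hq0.le, ← Real.rpow_mul (znorm_nonneg _),
                ← Real.rpow_mul (Hnorm_nonneg _), ← Real.rpow_mul (by norm_num), neg_mul, neg_mul]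
              ring
    _ ≤ (ENNReal.ofReal (4 ^ (lam * q)) * I ^ q) * ENNReal.ofReal (C2 * (ρ * r) ^ (2 * n + 2 - α * q - lam * q)) := by
        rw [lintegral_const_mul _ (by fun_prop)]
        gcongr
        exact H2 (ρ * r) (by positivity)
    _ = _ := by
        rw [hI, ← ENNReal.rpow_mul, ENNReal.ofReal_rpow_of_nonneg (by positivity) (by positivity),
          ← ENNReal.ofReal_mul (by positivity), ← ENNReal.ofReal_mul (by positivity)]
        congr 1
        rw [show 1 / p' * q = q / p' by ring, Real.mul_rpow hC1.le (by positivity), ← Real.rpow_mul hr.le, ← hkey,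
          Real.mul_rpow hρ0.le hr.le]
        have e : r ^ (lam * q + α * q - (2 * n + 2)) * r ^ (2 * n + 2 - α * q - lam * q) = 1 := by
          rw [← Real.rpow_add hr]
          have : lam * q + α * q - (2 * n + 2) + (2 * n + 2 - α * q - lam * q) = 0 := by ring
          rw [this, Real.rpow_zero]
        rw [show -(lam * q + α * q - (2 * n + 2)) = 2 * n + 2 - α * q - lam * q by ring]
        calc _ = C1 ^ (q / p') * 4 ^ (lam * q) * C2 * ρ ^ (2 * n + 2 - α * q - lam * q) * (r ^ (lam * q + α * q - (2 * n + 2)) * r ^ (2 * n + 2 - α * q - lam * q)) := by ring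
          _ = _ := by rw [e, mul_one]

lemma off2 (n : ℕ) (hn : 1 ≤ n) (p p' q lam α β : ℝ)
    (hp : 1 < p) (hp' : 1 / p + 1 / p' = 1) (hq0 : 0 < q) (hp0 : 0 < p') (hl : 0 < lam)
    (hβ : β < 2 * n / p') (hα : α < 2 * n / q)
    (hbal : lam + α + β = (2 * n + 2) * (1 / q + 1 / p')) :
    ∃ D : ℝ, ∃ σ : ℝ, 0 < D ∧ 0 < σ ∧ ∀ ρ r : ℝ, 4 ≤ ρ → 0 < r → ∀ g : Hn n → ℝ, Measurable g → (∀ v, 0 ≤ g v) →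
      ∫⁻ v, ENNReal.ofReal ((g v * znorm v.1 ^ β) ^ p) ≤ 1 →
      (∀ v, Hnorm v < ρ ^ 2 * r → g v = 0) →
      ∫⁻ u in {u | Hnorm u < ρ * r}, (ENNReal.ofReal (znorm u.1 ^ (-α)) * Jl lam g u) ^ q ≤ ENNReal.ofReal (D * ρ ^ (-σ)) := by
  have hn0 : (0 : ℝ) < 2 * n := by have : (0:ℝ) < n := by exact_mod_cast hn
                                   linarith
  have hβ' : β * p' < 2 * n := by rwa [lt_div_iff₀ hp0] at hβ
  have hα' : α * q < 2 * n := by rwa [lt_div_iff₀ hq0] at hα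
  have hkey : ((2 * n + 2) - β * p' - lam * p') * (q / p') = - ((2 * n + 2) - α * q) := by
    have : lam = (2 * n + 2) * (1 / q + 1 / p') - α - β := by linarith
    rw [this]; field_simp; ring
  have hkey2 : ((2 * n + 2) - β * p' - lam * p') < 0 := by
    by_contra hc
    have : 0 ≤ ((2 * n + 2) - β * p' - lam * p') * (q / p') := mul_nonneg (not_lt.1 hc) (by positivity)
    linarith
  obtain ⟨C1, hC1, H1⟩ := lem_out n hn (β * p') (lam * p') hβ' (by linarith)
  obtain ⟨C2, hC2, H2⟩ := lem_in n hn (α * q) hα'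
  refine ⟨C1 ^ (q / p') * 4 ^ (lam * q) * C2, (2 * n + 2) - α * q, by positivity, by linarith, ?_⟩
  intro ρ r hρ hr g hg hg0 hgP hgs
  have hρ0 : 0 < ρ := by linarith
  set I := ENNReal.ofReal (C1 * (ρ ^ 2 * r) ^ (2 * n + 2 - β * p' - lam * p')) ^ (1 / p') with hI
  have hJ : ∀ u : Hn n, Hnorm u < ρ * r → Jl lam g u ≤ ENNReal.ofReal (4 ^ lam) * I := by
    intro u hu
    have h1 := holder_w n hn p p' β hp hp' hp0 g hg hg0 (fun v => Hnorm v ^ (-lam)) (by fun_prop)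
      (fun v => Real.rpow_nonneg (Hnorm_nonneg v) _) {v | ρ ^ 2 * r ≤ Hnorm v} _ hgP
      (by
        refine le_trans (le_of_eq (lintegral_congr fun v => ?_)) (H1 (ρ ^ 2 * r) (by positivity))
        rw [← Real.rpow_mul (Hnorm_nonneg v), neg_mul])
    refine le_trans ?_ (mul_le_mul_right h1 _)
    rw [← lintegral_const_mul _ (by fun_prop), ← lintegral_indicator (Hset_le _), Jl]
    refine lintegral_mono fun v => ?_
    by_cases hv : Hnorm v < ρ ^ 2 * r
    · rw [hgs v hv]; simp
    · have hv := not_lt.1 hv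
      have hv0 : 0 < Hnorm v := lt_of_lt_of_le (by positivity) hv
      rw [Set.indicator_of_mem (show v ∈ {v : Hn n | ρ ^ 2 * r ≤ Hnorm v} from hv), mul_left_comm,
        ← ENNReal.ofReal_mul (p := 4 ^ lam) (by positivity)]
      gcongr
      rw [Hdist_comm]
      refine four_div hl hv0 (Hdist_lower v u ?_)
      nlinarith [mul_pos hρ0 hr]
  calc _ ≤ ∫⁻ u in {u : Hn n | Hnorm u < ρ * r}, (ENNReal.ofReal (4 ^ (lam * q)) * I ^ q) *
        (ENNReal.ofReal (znorm u.1 ^ (-(α * q)))) := by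
        refine setLIntegral_mono' (Hset_lt _) fun u hu => ?_
        have hz := Real.rpow_nonneg (znorm_nonneg u.1) (-α)
        calc _ ≤ (ENNReal.ofReal (znorm u.1 ^ (-α)) * (ENNReal.ofReal (4 ^ lam) * I)) ^ q := by
              gcongr; exact hJ u hu
          _ = _ := by
              simp only [ENNReal.mul_rpow_of_nonneg _ _ hq0.le]
              rw [ENNReal.ofReal_rpow_of_nonneg hz hq0.le,
                ENNReal.ofReal_rpow_of_nonneg (by positivity) hq0.le, ← Real.rpow_mul (znorm_nonneg _),
                ← Real.rpow_mul (by norm_num), neg_mul]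
              ring
    _ ≤ (ENNReal.ofReal (4 ^ (lam * q)) * I ^ q) * ENNReal.ofReal (C2 * (ρ * r) ^ (2 * n + 2 - α * q)) := by
        rw [lintegral_const_mul _ (by fun_prop)]
        gcongr
        exact H2 (ρ * r) (by positivity)
    _ = _ := by
        rw [hI, ← ENNReal.rpow_mul, ENNReal.ofReal_rpow_of_nonneg (by positivity) (by positivity),
          ← ENNReal.ofReal_mul (by positivity), ← ENNReal.ofReal_mul (by positivity)]
        congr 1
        rw [show 1 / p' * q = q / p' by ring, Real.mul_rpow hC1.le (by positivity), ← Real.rpow_mul (by positivity), hkey]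
        have hx : 0 < ρ * r := by positivity
        rw [show ρ ^ 2 * r = ρ * (ρ * r) by ring, Real.mul_rpow hρ0.le hx.le, Real.rpow_neg hx.le]
        field_simp



lemma ae_fst_ne2 {n : ℕ} (hn : 1 ≤ n) (c : Fin n → ℂ) : ∀ᵐ v : Hn n, v.1 ≠ c := by
  have : Nonempty (Fin n) := ⟨⟨0, hn⟩⟩
  have h : ∀ᵐ z : Fin n → ℂ, z ≠ c := by
    rw [ae_iff]; simp
  rw [Measure.volume_eq_prod]
  exact Measure.quasiMeasurePreserving_fst.ae h

/-- weighted fractional integral -/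
def Nf {n : ℕ} (lam α : ℝ) (g : Hn n → ℝ) (u : Hn n) : ℝ≥0∞ :=
  ENNReal.ofReal (znorm u.1 ^ (-α)) * Jl lam g u

/-- its `L^q` norm -/
def NN {n : ℕ} (q lam α : ℝ) (g : Hn n → ℝ) : ℝ≥0∞ :=
  (∫⁻ u, Nf lam α g u ^ q) ^ (1 / q)

lemma Nf_meas {n : ℕ} (lam α : ℝ) (g : Hn n → ℝ) (hg : Measurable g) : Measurable (Nf lam α g) := by
  have := Jl_meas lam g hg
  unfold Nf; fun_prop

lemma mu_eq {n : ℕ} (p β : ℝ) (g : Hn n → ℝ) (hg0 : ∀ v, 0 ≤ g v) :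
    muWDz p β g = volume.withDensity fun v => ENNReal.ofReal ((g v * znorm v.1 ^ β) ^ p) := by
  unfold muWDz
  congr 1; ext v
  rw [abs_of_nonneg (hg0 v), Real.mul_rpow (hg0 v) (Real.rpow_nonneg (znorm_nonneg _) _), Real.rpow_mul (znorm_nonneg _)]

lemma P_ind {n : ℕ} (p β : ℝ) (hp : 0 < p) (g : Hn n → ℝ) (hg0 : ∀ v, 0 ≤ g v) (S : Set (Hn n)) (hS : MeasurableSet S) :
    ∫⁻ v, ENNReal.ofReal ((S.indicator g v * znorm v.1 ^ β) ^ p) = muWDz p β g S := by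
  rw [mu_eq p β g hg0, withDensity_apply _ hS, ← lintegral_indicator hS]
  refine lintegral_congr fun v => ?_
  by_cases hv : v ∈ S
  · rw [Set.indicator_of_mem hv, Set.indicator_of_mem hv]
  · rw [Set.indicator_of_notMem hv, Set.indicator_of_notMem hv, zero_mul, Real.zero_rpow hp.ne', ENNReal.ofReal_zero]

lemma mu_univ {n : ℕ} (p β : ℝ) (g : Hn n → ℝ) (hg0 : ∀ v, 0 ≤ g v) :
    ∫⁻ v, ENNReal.ofReal ((g v * znorm v.1 ^ β) ^ p) = muWDz p β g Set.univ := by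
  rw [mu_eq p β g hg0, withDensity_apply _ MeasurableSet.univ, Measure.restrict_univ]

lemma eLp_P {n : ℕ} (p β : ℝ) (hp : 0 < p) (g : Hn n → ℝ) (hg0 : ∀ v, 0 ≤ g v) :
    eLpNorm (fun v => g v * znorm v.1 ^ β) (ENNReal.ofReal p) volume
      = (∫⁻ v, ENNReal.ofReal ((g v * znorm v.1 ^ β) ^ p)) ^ (1 / p) := by
  rw [eLpNorm_eq_lintegral_rpow_enorm_toReal (by simpa using hp) (by simp), ENNReal.toReal_ofReal hp.le]
  congr 1
  refine lintegral_congr fun v => ?_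
  have h0 : 0 ≤ g v * znorm v.1 ^ β := mul_nonneg (hg0 v) (Real.rpow_nonneg (znorm_nonneg _) _)
  rw [Real.enorm_eq_ofReal h0, ENNReal.ofReal_rpow_of_nonneg h0 hp.le]

lemma eLp_N {n : ℕ} (hn : 1 ≤ n) (q lam α : ℝ) (hq : 0 < q) (g : Hn n → ℝ) (hg : Measurable g) (hg0 : ∀ v, 0 ≤ g v)
    (hfin : ∫⁻ u, Nf lam α g u ^ q ≠ ∞) :
    eLpNorm (fun u => Ilam lam g u * znorm u.1 ^ (-α)) (ENNReal.ofReal q) volume = NN q lam α g := by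
  rw [eLpNorm_eq_lintegral_rpow_enorm_toReal (by simpa using hq) (by simp), ENNReal.toReal_ofReal hq.le, NN]
  congr 1
  have hm := Nf_meas lam α g hg
  have hae := ae_lt_top (hm.pow_const q) hfin
  refine lintegral_congr_ae ?_
  filter_upwards [hae, ae_fst_ne hn] with u hu hu0
  congr 1
  have hz := znorm_pos hu0
  have hzp : 0 < znorm u.1 ^ (-α) := Real.rpow_pos_of_pos hz _
  have hJ : Jl lam g u ≠ ∞ := by
    intro h
    unfold Nf at hu
    rw [h, ENNReal.mul_top (by simpa using hzp), ENNReal.top_rpow_of_pos hq] at hu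
    exact lt_irrefl _ hu
  have hd : Measurable fun v => Hdist u v := Measurable.of_uncurry_left Hdist_meas
  have hI : Ilam lam g u = (Jl lam g u).toReal := by
    unfold Ilam Jl
    rw [integral_eq_lintegral_of_nonneg_ae
      (Eventually.of_forall fun v => div_nonneg (hg0 v) (Real.rpow_nonneg (Hdist_nonneg u v) _))
      (hg.div (hd.pow_const lam)).aestronglyMeasurable]
    congr 1
    refine lintegral_congr fun v => ?_
    rw [← ENNReal.ofReal_mul (hg0 v), Real.rpow_neg (Hdist_nonneg u v), div_eq_mul_inv]
  rw [hI, Real.enorm_eq_ofReal (by positivity), Nf, ENNReal.ofReal_mul (by positivity), ENNReal.ofReal_toReal hJ, mul_comm]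

lemma Jl_smul {n : ℕ} (lam c : ℝ) (hc : 0 ≤ c) (g : Hn n → ℝ) (hg : Measurable g) (u : Hn n) :
    Jl lam (fun v => c * g v) u = ENNReal.ofReal c * Jl lam g u := by
  have hd : Measurable fun v => Hdist u v := Measurable.of_uncurry_left Hdist_meas
  unfold Jl
  rw [← lintegral_const_mul _ (by fun_prop)]
  refine lintegral_congr fun v => ?_
  rw [ENNReal.ofReal_mul hc, mul_assoc]

lemma Nf_add {n : ℕ} (lam α : ℝ) (g h : Hn n → ℝ) (hg : Measurable g) (hg0 : ∀ v, 0 ≤ g v) (hh0 : ∀ v, 0 ≤ h v) (u : Hn n) :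
    Nf lam α (fun v => g v + h v) u = Nf lam α g u + Nf lam α h u := by
  have hd : Measurable fun v => Hdist u v := Measurable.of_uncurry_left Hdist_meas
  unfold Nf Jl
  rw [← mul_add, ← lintegral_add_left (by fun_prop)]
  congr 1
  refine lintegral_congr fun v => ?_
  rw [ENNReal.ofReal_add (hg0 v) (hh0 v), add_mul]

lemma NN_smul {n : ℕ} (q lam α c : ℝ) (hq : 0 < q) (hc : 0 ≤ c) (g : Hn n → ℝ) (hg : Measurable g) :
    NN q lam α (fun v => c * g v) = ENNReal.ofReal c * NN q lam α g := by
  have hm := Nf_meas lam α g hg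
  unfold NN
  have : ∀ u, Nf lam α (fun v => c * g v) u ^ q = ENNReal.ofReal c ^ q * Nf lam α g u ^ q := by
    intro u
    rw [← ENNReal.mul_rpow_of_nonneg _ _ hq.le, Nf, Nf, Jl_smul lam c hc g hg]
    congr 1; ring
  simp only [this]
  rw [lintegral_const_mul _ (by fun_prop), ENNReal.mul_rpow_of_nonneg _ _ (by positivity), ← ENNReal.rpow_mul,
    mul_one_div_cancel hq.ne', ENNReal.rpow_one]

lemma g_ae_zero {n : ℕ} (hn : 1 ≤ n) (p β : ℝ) (hp : 0 < p) (g : Hn n → ℝ) (hg : Measurable g) (hg0 : ∀ v, 0 ≤ g v)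
    (h : ∫⁻ v, ENNReal.ofReal ((g v * znorm v.1 ^ β) ^ p) = 0) : ∀ᵐ v, g v = 0 := by
  rw [lintegral_eq_zero_iff (by fun_prop)] at h
  filter_upwards [h, ae_fst_ne hn] with v hv hv0
  have hz := znorm_pos hv0
  by_contra hne
  have : 0 < g v := lt_of_le_of_ne (hg0 v) (Ne.symm hne)
  have h2 : 0 < (g v * znorm v.1 ^ β) ^ p := by positivity
  simp only [Pi.zero_apply, ENNReal.ofReal_eq_zero] at hv
  linarith

lemma NN_hom {n : ℕ} (hn : 1 ≤ n) (p q lam α β : ℝ) (hp : 0 < p) (hq : 0 < q) (C : ℝ≥0∞)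
    (hC : ∀ g : Hn n → ℝ, Measurable g → (∀ v, 0 ≤ g v) →
      ∫⁻ v, ENNReal.ofReal ((g v * znorm v.1 ^ β) ^ p) = 1 → NN q lam α g ≤ C)
    (g : Hn n → ℝ) (hg : Measurable g) (hg0 : ∀ v, 0 ≤ g v) (m : ℝ≥0∞) (hm : m ≠ ∞)
    (hgm : ∫⁻ v, ENNReal.ofReal ((g v * znorm v.1 ^ β) ^ p) = m) : NN q lam α g ≤ C * m ^ (1 / p) := by
  by_cases h0 : m = 0
  · have h := g_ae_zero hn p β hp g hg hg0 (hgm.trans h0)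
    have hJ : ∀ u, Jl lam g u = 0 := by
      intro u
      unfold Jl
      refine (lintegral_congr_ae ?_).trans lintegral_zero
      filter_upwards [h] with v hv
      rw [hv]; simp
    have : NN q lam α g = 0 := by
      unfold NN Nf
      simp [hJ, hq]
    rw [this]; exact zero_le
  · have hmr : 0 < m.toReal := ENNReal.toReal_pos h0 hm
    set c := m.toReal ^ (-(1 / p)) with hc
    have hc0 : 0 < c := by positivity
    have h1 := hC (fun v => c * g v) (by fun_prop) (fun v => mul_nonneg hc0.le (hg0 v)) (by
      have : ∀ v : Hn n, ENNReal.ofReal ((c * g v * znorm v.1 ^ β) ^ p) = m⁻¹ * ENNReal.ofReal ((g v * znorm v.1 ^ β) ^ p) := by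
        intro v
        have hb := Real.rpow_nonneg (znorm_nonneg v.1) β
        rw [mul_assoc, Real.mul_rpow hc0.le (mul_nonneg (hg0 v) hb), ENNReal.ofReal_mul (by positivity), hc, ← Real.rpow_mul hmr.le]
        congr 1
        rw [show -(1 / p) * p = -1 by field_simp, Real.rpow_neg_one, ENNReal.ofReal_inv_of_pos hmr, ENNReal.ofReal_toReal hm]
      simp only [this]
      rw [lintegral_const_mul _ (by fun_prop), hgm, ENNReal.inv_mul_cancel h0 hm])
    rw [NN_smul q lam α c hq hc0.le g hg] at h1
    have hcm : ENNReal.ofReal c = (m ^ (1 / p))⁻¹ := by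
      rw [hc, ← ENNReal.rpow_neg, ← ENNReal.ofReal_rpow_of_pos hmr, ENNReal.ofReal_toReal hm]
    rw [hcm] at h1
    have ha : m ^ (1 / p) ≠ 0 := by simp [h0, hm, hp]
    have hb : m ^ (1 / p) ≠ ∞ := by simp [h0, hm, hp.le]
    calc NN q lam α g = (m ^ (1 / p))⁻¹ * NN q lam α g * m ^ (1 / p) := by
          rw [mul_right_comm, ENNReal.inv_mul_cancel ha hb, one_mul]
      _ ≤ _ := by gcongr

lemma NN_pos {n : ℕ} (hn : 1 ≤ n) (p q lam α β : ℝ) (hp : 0 < p) (hq : 0 < q)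
    (g : Hn n → ℝ) (hg : Measurable g) (hg0 : ∀ v, 0 ≤ g v)
    (hgm : ∫⁻ v, ENNReal.ofReal ((g v * znorm v.1 ^ β) ^ p) = 1) : NN q lam α g ≠ 0 := by
  intro h
  have hm := Nf_meas lam α g hg
  unfold NN at h
  rw [ENNReal.rpow_eq_zero_iff_of_pos (by positivity), lintegral_eq_zero_iff (by fun_prop)] at h
  have hne : NeZero (volume : Measure (Hn n)) := ⟨by
    intro h0
    rw [h0] at hgm; simp at hgm⟩
  obtain ⟨u, hu, hu0⟩ := (h.and (ae_fst_ne hn)).exists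
  have hz := znorm_pos hu0
  have hzp : 0 < znorm u.1 ^ (-α) := Real.rpow_pos_of_pos hz _
  simp only [Pi.zero_apply, ENNReal.rpow_eq_zero_iff_of_pos hq, Nf, mul_eq_zero, ENNReal.ofReal_eq_zero, not_le.2 hzp, false_or] at hu
  have hd : Measurable fun v => Hdist u v := Measurable.of_uncurry_left Hdist_meas
  unfold Jl at hu
  rw [lintegral_eq_zero_iff (by fun_prop)] at hu
  have : ∫⁻ v, ENNReal.ofReal ((g v * znorm v.1 ^ β) ^ p) = 0 := by
    refine (lintegral_congr_ae ?_).trans lintegral_zero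
    filter_upwards [hu, ae_fst_ne2 hn u.1] with v hv hvu
    have hdp : 0 < Hdist u v := (znorm_pos (sub_ne_zero.2 hvu)).trans_le (znorm_sub_le_Hdist u v)
    have hdp2 := Real.rpow_pos_of_pos hdp (-lam)
    simp only [Pi.zero_apply, mul_eq_zero, ENNReal.ofReal_eq_zero, not_le.2 hdp2, or_false] at hv
    rw [le_antisymm hv (hg0 v), zero_mul, Real.zero_rpow hp.ne', ENNReal.ofReal_zero]
  rw [this] at hgm
  exact zero_ne_one hgm



lemma ab_aux (a b : ℝ≥0∞) (ε κ : ℝ) (hε : 0 < ε) (hε2 : ε ≤ 1 / 2) (hκ : 1 < κ)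
    (hab : a + b ≤ 1) (ha : ENNReal.ofReal ε ≤ a) (hb : ENNReal.ofReal ε ≤ b) :
    a ^ κ + b ^ κ ≤ ENNReal.ofReal (1 - ε) ^ (κ - 1) := by
  have hx : ∀ x y : ℝ≥0∞, x + y ≤ 1 → ENNReal.ofReal ε ≤ y → x ^ κ ≤ x * ENNReal.ofReal (1 - ε) ^ (κ - 1) := by
    intro x y hxy hy
    have h1 : x ≤ ENNReal.ofReal (1 - ε) := by
      rw [ENNReal.ofReal_sub _ hε.le, ENNReal.ofReal_one]
      refine ENNReal.le_sub_of_add_le_right ENNReal.ofReal_ne_top ?_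
      exact (add_le_add le_rfl hy).trans hxy
    calc x ^ κ = x ^ (1 + (κ - 1)) := by congr 1; ring
      _ = x * x ^ (κ - 1) := by rw [ENNReal.rpow_add_of_nonneg _ _ zero_le_one (by linarith), ENNReal.rpow_one]
      _ ≤ _ := by
        have : 0 ≤ κ - 1 := by linarith
        gcongr
  calc a ^ κ + b ^ κ ≤ a * ENNReal.ofReal (1 - ε) ^ (κ - 1) + b * ENNReal.ofReal (1 - ε) ^ (κ - 1) :=
        add_le_add (hx a b hab hb) (hx b a (by rwa [add_comm]) ha)
    _ = (a + b) * ENNReal.ofReal (1 - ε) ^ (κ - 1) := by rw [add_mul]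
    _ ≤ 1 * _ := by gcongr
    _ = _ := one_mul _

lemma pigeon {n : ℕ} (ν : Measure (Hn n)) (hν : ν Set.univ = 1) (ρ : ℝ) (hρ : 4 ≤ ρ) (M : ℕ) (hM : 0 < M) :
    ∃ m < M, ν {v | ρ ^ (2 * m) ≤ Hnorm v ∧ Hnorm v < ρ ^ (2 * m + 2)} ≤ (M : ℝ≥0∞)⁻¹ := by
  have hms : ∀ m : ℕ, MeasurableSet {v : Hn n | ρ ^ (2 * m) ≤ Hnorm v ∧ Hnorm v < ρ ^ (2 * m + 2)} := fun m =>
    (Hset_le (n := n) (ρ ^ (2 * m))).inter (Hset_lt (n := n) (ρ ^ (2 * m + 2)))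
  by_contra! hc
  have h1 : ∑ m ∈ Finset.range M, (M : ℝ≥0∞)⁻¹ <
      ∑ m ∈ Finset.range M, ν {v | ρ ^ (2 * m) ≤ Hnorm v ∧ Hnorm v < ρ ^ (2 * m + 2)} :=
    ENNReal.sum_lt_sum_of_nonempty (by simpa using hM.ne') fun m hm => hc m (Finset.mem_range.1 hm)
  have h2 : ∑ m ∈ Finset.range M, ν {v | ρ ^ (2 * m) ≤ Hnorm v ∧ Hnorm v < ρ ^ (2 * m + 2)} ≤ ν Set.univ := by
    refine sum_measure_le_measure_univ (fun m _ => (hms m).nullMeasurableSet) ?_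
    intro i _ j _ hij
    refine Disjoint.aedisjoint ?_
    have key : ∀ i j : ℕ, i < j → ∀ v : Hn n, Hnorm v < ρ ^ (2 * i + 2) → ρ ^ (2 * j) ≤ Hnorm v → False := by
      intro i j hij v h1 h2
      have : ρ ^ (2 * i + 2) ≤ ρ ^ (2 * j) := pow_le_pow_right₀ (by linarith) (by omega)
      linarith
    rw [Set.disjoint_left]
    intro v hv hv'
    rcases lt_or_gt_of_ne hij with h | h
    · exact key i j h v hv.2 hv'.1
    · exact key j i h v hv'.2 hv.1
  rw [hν] at h2
  have h3 : ∑ m ∈ Finset.range M, (M : ℝ≥0∞)⁻¹ = 1 := by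
    rw [Finset.sum_const, Finset.card_range, nsmul_eq_mul]
    exact ENNReal.mul_inv_cancel (by exact_mod_cast hM.ne') (by simp)
  rw [h3] at h1
  exact absurd h2 (not_le.2 h1)

lemma mink4 {X : Type*} [MeasurableSpace X] (μ : Measure X) (q : ℝ) (hq : 1 ≤ q) (f1 f2 f3 f4 : X → ℝ≥0∞)
    (h1 : Measurable f1) (h2 : Measurable f2) (h3 : Measurable f3) (h4 : Measurable f4) :
    (∫⁻ x, (f1 x + f2 x + f3 x + f4 x) ^ q ∂μ) ^ (1 / q) ≤
      (∫⁻ x, f1 x ^ q ∂μ) ^ (1 / q) + (∫⁻ x, f2 x ^ q ∂μ) ^ (1 / q) + (∫⁻ x, f3 x ^ q ∂μ) ^ (1 / q) + (∫⁻ x, f4 x ^ q ∂μ) ^ (1 / q) := by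
  have a1 := ENNReal.lintegral_Lp_add_le (μ := μ) ((h1.add h2).add h3).aemeasurable h4.aemeasurable hq
  have a2 := ENNReal.lintegral_Lp_add_le (μ := μ) (h1.add h2).aemeasurable h3.aemeasurable hq
  have a3 := ENNReal.lintegral_Lp_add_le (μ := μ) h1.aemeasurable h2.aemeasurable hq
  exact a1.trans (add_le_add (a2.trans (add_le_add a3 le_rfl)) le_rfl)

lemma split_bound {n : ℕ} (q lam α : ℝ) (hq : 1 < q) (g1 g2 g3 : Hn n → ℝ)
    (hm1 : Measurable g1) (hm2 : Measurable g2) (hm3 : Measurable g3)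
    (h1 : ∀ v, 0 ≤ g1 v) (h2 : ∀ v, 0 ≤ g2 v) (h3 : ∀ v, 0 ≤ g3 v) (s : ℝ) (E1 E2 N1 N2 N3 T : ℝ≥0∞)
    (hE1 : ∫⁻ u in {u | s ≤ Hnorm u}, Nf lam α g1 u ^ q ≤ E1)
    (hE2 : ∫⁻ u in {u | Hnorm u < s}, Nf lam α g2 u ^ q ≤ E2)
    (hN1 : NN q lam α g1 ≤ N1) (hN2 : NN q lam α g2 ≤ N2) (hN3 : NN q lam α g3 ≤ N3)
    (hT : N1 ^ q + N2 ^ q ≤ T) :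
    NN q lam α (fun v => g1 v + g2 v + g3 v) ≤ T ^ (1 / q) + E1 ^ (1 / q) + E2 ^ (1 / q) + N3 := by
  have hq0 : 0 < q := by linarith
  have k1 := Nf_meas lam α g1 hm1
  have k2 := Nf_meas lam α g2 hm2
  have k3 := Nf_meas lam α g3 hm3
  set U := {u : Hn n | s ≤ Hnorm u} with hU
  have hUm : MeasurableSet U := Hset_le s
  have hUc : Uᶜ = {u : Hn n | Hnorm u < s} := by ext u; simp [hU]
  rw [← hUc] at hE2
  have ind : ∀ (W : Set (Hn n)) (f : Hn n → ℝ≥0∞), MeasurableSet W → ∫⁻ u, (W.indicator f u) ^ q = ∫⁻ u in W, f u ^ q := by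
    intro W f hW
    rw [← lintegral_indicator hW]
    refine lintegral_congr fun u => ?_
    by_cases hu : u ∈ W
    · simp [hu]
    · simp [hu, hq0]
  have NNq : ∀ g : Hn n → ℝ, ∀ N, NN q lam α g ≤ N → ∫⁻ u, Nf lam α g u ^ q ≤ N ^ q := by
    intro g N h
    calc _ = NN q lam α g ^ q := by rw [NN, ← ENNReal.rpow_mul, one_div_mul_cancel hq0.ne', ENNReal.rpow_one]
      _ ≤ _ := by gcongr
  have hdec : ∀ u, Nf lam α (fun v => g1 v + g2 v + g3 v) u =
      (Uᶜ.indicator (Nf lam α g1) u + U.indicator (Nf lam α g2) u) + U.indicator (Nf lam α g1) u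
        + Uᶜ.indicator (Nf lam α g2) u + Nf lam α g3 u := by
    intro u
    rw [Nf_add lam α (fun v => g1 v + g2 v) g3 (by fun_prop) (fun v => add_nonneg (h1 v) (h2 v)) h3,
      Nf_add lam α g1 g2 hm1 h1 h2]
    by_cases hu : u ∈ U
    · simp [hu, add_comm]
    · simp [hu]
  rw [NN]
  simp only [hdec]
  refine (mink4 volume q hq.le _ _ _ _ ((k1.indicator hUm.compl).add (k2.indicator hUm)) (k1.indicator hUm) (k2.indicator hUm.compl) k3).trans ?_
  have hq1 : 0 ≤ 1 / q := by positivity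
  have m1 : ∫⁻ u, (Uᶜ.indicator (Nf lam α g1) u + U.indicator (Nf lam α g2) u) ^ q ≤ T := by
    calc _ = ∫⁻ u, ((Uᶜ.indicator (Nf lam α g1) u) ^ q + (U.indicator (Nf lam α g2) u) ^ q) := by
          refine lintegral_congr fun u => ?_
          by_cases hu : u ∈ U
          · simp [hu, hq0]
          · simp [hu, hq0]
      _ = (∫⁻ u in Uᶜ, Nf lam α g1 u ^ q) + (∫⁻ u in U, Nf lam α g2 u ^ q) := by
          rw [lintegral_add_left ((k1.indicator hUm.compl).pow_const q), ind _ _ hUm.compl, ind _ _ hUm]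
      _ ≤ (∫⁻ u, Nf lam α g1 u ^ q) + (∫⁻ u, Nf lam α g2 u ^ q) :=
          add_le_add (setLIntegral_le_lintegral _ _) (setLIntegral_le_lintegral _ _)
      _ ≤ N1 ^ q + N2 ^ q := add_le_add (NNq _ _ hN1) (NNq _ _ hN2)
      _ ≤ T := hT
  refine add_le_add (add_le_add (add_le_add ?_ ?_) ?_) hN3
  · exact ENNReal.rpow_le_rpow m1 hq1
  · rw [ind _ _ hUm]; exact ENNReal.rpow_le_rpow hE1 hq1
  · rw [ind _ _ hUm.compl]; exact ENNReal.rpow_le_rpow hE2 hq1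



lemma tend_aux (D σ q : ℝ) (hσ : 0 < σ) (hq : 0 < q) :
    Tendsto (fun k : ℕ => ENNReal.ofReal (D * ((k : ℝ) + 4) ^ (-σ)) ^ (1 / q)) atTop (nhds 0) := by
  have h1 : Tendsto (fun k : ℕ => (k : ℝ) + 4) atTop atTop :=
    tendsto_atTop_add_const_right _ _ tendsto_natCast_atTop_atTop
  have h2 := ((tendsto_rpow_neg_atTop hσ).comp h1).const_mul D
  have h3 := (ENNReal.continuous_ofReal.tendsto _).comp h2
  have h4 := ((ENNReal.continuous_rpow_const (y := 1 / q)).tendsto _).comp h3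
  rw [mul_zero, ENNReal.ofReal_zero, ENNReal.zero_rpow_of_pos (by positivity)] at h4
  exact h4

lemma conc (n : ℕ) (hn : 1 ≤ n) (p p' q lam α β : ℝ)
    (hp : 1 < p) (hp' : 1 / p + 1 / p' = 1) (hp0 : 0 < p') (hl : 0 < lam)
    (hβ : β < 2 * n / p') (hα : α < 2 * n / q)
    (hbal : lam + α + β = (2 * n + 2) * (1 / q + 1 / p')) (hpq : p < q)
    (C : ℝ≥0∞) (hC0 : C ≠ 0) (hCt : C ≠ ∞)
    (hC : ∀ g : Hn n → ℝ, Measurable g → (∀ v, 0 ≤ g v) →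
      ∫⁻ v, ENNReal.ofReal ((g v * znorm v.1 ^ β) ^ p) = 1 → NN q lam α g ≤ C)
    (ε : ℝ) (hε : 0 < ε) (hε2 : ε ≤ 1 / 2) :
    ∃ R : ℝ, 0 < R ∧ ∃ c : ℝ≥0∞, c < C ∧ ∀ g : Hn n → ℝ, Measurable g → (∀ v, 0 ≤ g v) →
      ∫⁻ v, ENNReal.ofReal ((g v * znorm v.1 ^ β) ^ p) = 1 →
      1 / 2 ≤ muWDz p β g {v | Hnorm v < 1} →
      muWDz p β g {v | Hnorm v < R} < 1 - ENNReal.ofReal ε → NN q lam α g ≤ c := by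
  have hp00 : 0 < p := by linarith
  have hq0 : 0 < q := by linarith
  obtain ⟨D1, σ1, hD1, hσ1, H1⟩ := off1 n hn p p' q lam α β hp hp' hq0 hp0 hl hβ hα hbal
  obtain ⟨D2, σ2, hD2, hσ2, H2⟩ := off2 n hn p p' q lam α β hp hp' hq0 hp0 hl hβ hα hbal
  have hκ : 1 < q / p := by rw [lt_div_iff₀ hp00]; linarith
  set T := C ^ q * ENNReal.ofReal (1 - ε) ^ (q / p - 1) with hTd
  have hT : T ^ (1 / q) < C := by
    rw [hTd, ENNReal.mul_rpow_of_nonneg _ _ (by positivity), ← ENNReal.rpow_mul, mul_one_div_cancel hq0.ne', ENNReal.rpow_one]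
    have : (ENNReal.ofReal (1 - ε) ^ (q / p - 1)) ^ (1 / q) < 1 := by
      refine ENNReal.rpow_lt_one (ENNReal.rpow_lt_one ?_ (by linarith)) (by positivity)
      rw [ENNReal.ofReal_lt_one]; linarith
    calc _ < C * 1 := ENNReal.mul_lt_mul_right hC0 hCt this
      _ = C := mul_one C
  have hlim : Tendsto (fun k : ℕ => T ^ (1 / q) + ENNReal.ofReal (D1 * ((k : ℝ) + 4) ^ (-σ1)) ^ (1 / q)
      + ENNReal.ofReal (D2 * ((k : ℝ) + 4) ^ (-σ2)) ^ (1 / q) + C * (((k + 1 : ℕ) : ℝ≥0∞)⁻¹) ^ (1 / p)) atTop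
      (nhds (T ^ (1 / q) + 0 + 0 + C * 0)) := by
    refine ((tendsto_const_nhds.add (tend_aux D1 σ1 q hσ1 hq0)).add (tend_aux D2 σ2 q hσ2 hq0)).add ?_
    refine ENNReal.Tendsto.const_mul ?_ (Or.inr hCt)
    have h1 := ENNReal.tendsto_inv_nat_nhds_zero.comp (tendsto_add_atTop_nat 1)
    have h4 := ((ENNReal.continuous_rpow_const (y := 1 / p)).tendsto _).comp h1
    rw [ENNReal.zero_rpow_of_pos (by positivity)] at h4
    exact h4
  have hlt : T ^ (1 / q) + 0 + 0 + C * 0 < C := by simpa using hT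
  obtain ⟨k, hk⟩ := (hlim.eventually_lt_const hlt).exists
  set ρ : ℝ := (k : ℝ) + 4 with hρd
  have hρ : 4 ≤ ρ := by rw [hρd]; linarith [Nat.cast_nonneg (α := ℝ) k]
  have hρ0 : 0 < ρ := by linarith
  refine ⟨ρ ^ (2 * (k + 1)), by positivity, _, hk, fun g hg hg0 hgP hg1 hgR => ?_⟩
  set ν := muWDz p β g with hν
  have hν1 : ν Set.univ = 1 := by rw [hν, ← mu_univ p β g hg0, hgP]
  have hνle : ∀ S, ν S ≤ 1 := fun S => hν1 ▸ measure_mono (Set.subset_univ S)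
  obtain ⟨m, hm, hmass⟩ := pigeon ν hν1 ρ hρ (k + 1) (by omega)
  set r := ρ ^ (2 * m) with hr
  have hr1 : 1 ≤ r := one_le_pow₀ (by linarith)
  have hr2 : ρ ^ (2 * m + 2) = ρ ^ 2 * r := by rw [hr]; ring
  rw [hr2] at hmass
  set S1 := {v : Hn n | Hnorm v < r}
  set S2 := {v : Hn n | ρ ^ 2 * r ≤ Hnorm v}
  set S3 := {v : Hn n | r ≤ Hnorm v ∧ Hnorm v < ρ ^ 2 * r}
  have hS1 : MeasurableSet S1 := Hset_lt _
  have hS2 : MeasurableSet S2 := Hset_le _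
  have hS3 : MeasurableSet S3 := (Hset_le (n := n) r).inter (Hset_lt (n := n) (ρ ^ 2 * r))
  have hrr : r ≤ ρ ^ 2 * r := le_mul_of_one_le_left (by linarith) (one_le_pow₀ (by linarith))
  have i0 : ∀ S : Set (Hn n), ∀ v, 0 ≤ S.indicator g v := fun S v => Set.indicator_nonneg (fun v _ => hg0 v) v
  have iP : ∀ S : Set (Hn n), MeasurableSet S → ∫⁻ v, ENNReal.ofReal ((S.indicator g v * znorm v.1 ^ β) ^ p) = ν S :=
    fun S hS => P_ind p β hp00 g hg0 S hS
  have iN : ∀ S : Set (Hn n), MeasurableSet S → NN q lam α (S.indicator g) ≤ C * ν S ^ (1 / p) := fun S hS =>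
    NN_hom hn p q lam α β hp00 hq0 C hC _ (hg.indicator hS) (i0 S) _ (ne_top_of_le_ne_top ENNReal.one_ne_top (hνle S)) (iP S hS)
  have hdec : g = fun v => S1.indicator g v + S2.indicator g v + S3.indicator g v := by
    ext v
    by_cases h1 : Hnorm v < r
    · have a1 : v ∈ S1 := h1
      have a2 : v ∉ S2 := fun h => by have : ρ ^ 2 * r ≤ Hnorm v := h
                                      linarith
      have a3 : v ∉ S3 := fun h => by have : r ≤ Hnorm v := h.1
                                      linarith
      simp [a1, a2, a3]
    · have a1 : v ∉ S1 := h1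
      by_cases h2 : Hnorm v < ρ ^ 2 * r
      · have a2 : v ∉ S2 := fun h => by have : ρ ^ 2 * r ≤ Hnorm v := h
                                        linarith
        have a3 : v ∈ S3 := ⟨not_lt.1 h1, h2⟩
        simp [a1, a2, a3]
      · have a2 : v ∈ S2 := not_lt.1 h2
        have a3 : v ∉ S3 := fun h => h2 h.2
        simp [a1, a2, a3]
  have hεe : ENNReal.ofReal ε ≤ 1 / 2 := by
    calc ENNReal.ofReal ε ≤ ENNReal.ofReal (1 / 2) := ENNReal.ofReal_le_ofReal hε2
      _ = 1 / 2 := by rw [ENNReal.ofReal_div_of_pos (by norm_num)]; simp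
  have ha : ENNReal.ofReal ε ≤ ν S1 := hεe.trans (hg1.trans (measure_mono fun v (hv : Hnorm v < 1) => lt_of_lt_of_le hv hr1))
  have hb : ENNReal.ofReal ε ≤ ν S2 := by
    have hR : ρ ^ 2 * r ≤ ρ ^ (2 * (k + 1)) := by
      rw [← hr2]; exact pow_le_pow_right₀ (by linarith) (by omega)
    have hcov : (1 : ℝ≥0∞) ≤ ν {v | Hnorm v < ρ ^ (2 * (k + 1))} + ν S2 := by
      rw [← hν1]
      refine (measure_mono fun v _ => ?_).trans (measure_union_le _ _)
      by_cases h : Hnorm v < ρ ^ (2 * (k + 1))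
      · exact Or.inl h
      · exact Or.inr (hR.trans (not_lt.1 h))
    by_contra hc
    have hc := not_le.1 hc
    have : ν {v | Hnorm v < ρ ^ (2 * (k + 1))} + ν S2 < (1 - ENNReal.ofReal ε) + ENNReal.ofReal ε := ENNReal.add_lt_add hgR hc
    rw [tsub_add_cancel_of_le (hεe.trans (by norm_num))] at this
    exact absurd hcov (not_le.2 this)
  have hab : ν S1 + ν S2 ≤ 1 := by
    rw [← measure_union _ hS2]
    · exact hνle _
    · rw [Set.disjoint_left]
      intro v h1 h2
      have h1 : Hnorm v < r := h1
      have h2 : ρ ^ 2 * r ≤ Hnorm v := h2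
      linarith
  have hTT : (C * ν S1 ^ (1 / p)) ^ q + (C * ν S2 ^ (1 / p)) ^ q ≤ T := by
    rw [ENNReal.mul_rpow_of_nonneg _ _ hq0.le, ENNReal.mul_rpow_of_nonneg _ _ hq0.le, ← mul_add, ← ENNReal.rpow_mul, ← ENNReal.rpow_mul,
      show 1 / p * q = q / p by ring, hTd]
    gcongr
    exact ab_aux _ _ ε (q / p) hε hε2 hκ hab ha hb
  have hfin := split_bound q lam α (by linarith) (S1.indicator g) (S2.indicator g) (S3.indicator g)
    (hg.indicator hS1) (hg.indicator hS2) (hg.indicator hS3) (i0 _) (i0 _) (i0 _) (ρ * r) _ _ _ _ _ _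
    (H1 ρ r hρ (by linarith) (S1.indicator g) (hg.indicator hS1) (i0 _) ((iP S1 hS1).trans_le (hνle _))
      (fun v hv => Set.indicator_of_notMem (show v ∉ S1 from fun h => absurd (show Hnorm v < r from h) (by linarith)) _))
    (H2 ρ r hρ (by linarith) (S2.indicator g) (hg.indicator hS2) (i0 _) ((iP S2 hS2).trans_le (hνle _))
      (fun v hv => Set.indicator_of_notMem (show v ∉ S2 from fun h => absurd (show ρ ^ 2 * r ≤ Hnorm v from h) (by linarith)) _))
    (iN S1 hS1) (iN S2 hS2) (iN S3 hS3) hTT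
  rw [← hdec] at hfin
  refine hfin.trans ?_
  gcongr



/-- cut-off functions -/
def cutf {n : ℕ} (R : ℝ) (v : Hn n) : ℝ := max 0 (min 1 (R + 1 - ‖v‖))

lemma cutf_nonneg {n : ℕ} (R : ℝ) (v : Hn n) : 0 ≤ cutf R v := le_max_left _ _
lemma cutf_le_one {n : ℕ} (R : ℝ) (v : Hn n) : cutf R v ≤ 1 := max_le zero_le_one (min_le_left _ _)
lemma cutf_eq_one {n : ℕ} (R : ℝ) (v : Hn n) (h : ‖v‖ ≤ R) : cutf R v = 1 := by
  unfold cutf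
  rw [min_eq_left (by linarith), max_eq_right zero_le_one]
lemma cutf_cont {n : ℕ} (R : ℝ) : Continuous (cutf (n := n) R) := by
  unfold cutf; fun_prop
lemma cutf_supp {n : ℕ} (R : ℝ) : HasCompactSupport (cutf (n := n) R) := by
  refine HasCompactSupport.of_support_subset_isCompact (isCompact_closedBall (0 : Hn n) (R + 1)) ?_
  intro v hv
  rw [mem_closedBall_zero_iff]
  by_contra h
  apply hv
  unfold cutf
  exact max_eq_left ((min_le_right _ _).trans (by linarith [not_le.1 h]))
lemma cutf_mono {n : ℕ} {R S : ℝ} (h : R ≤ S) (v : Hn n) : cutf R v ≤ cutf S v := by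
  unfold cutf
  gcongr

lemma norm_le_of_Hnorm {n : ℕ} {R : ℝ} (hR : 0 < R) (v : Hn n) (h : Hnorm v < R) : ‖v‖ ≤ R + R ^ 2 := by
  rw [Prod.norm_def]
  have h1 := (norm_le_znorm v.1).trans (znorm_le_Hnorm v)
  have h2 := abs_le_Hnorm v
  have h0 := Hnorm_nonneg v
  refine max_le (by nlinarith) ?_
  rw [Real.norm_eq_abs]
  nlinarith

lemma weak_limit {n : ℕ} (ν : ℕ → Measure (Hn n)) (hν : ∀ i, ν i Set.univ = 1)
    (ht : ∀ ε : ℝ, 0 < ε → ∃ R : ℝ, 0 < R ∧ ∀ i, 1 - ENNReal.ofReal ε ≤ ν i {v | Hnorm v < R})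
    (μ : Measure (Hn n))
    (hlim : ∀ f : Hn n → ℝ, Continuous f → HasCompactSupport f →
        Tendsto (fun i => ∫ u, f u ∂ ν i) atTop (nhds (∫ u, f u ∂ μ))) :
    μ Set.univ = 1 := by
  have hP : ∀ i, IsProbabilityMeasure (ν i) := fun i => ⟨hν i⟩
  -- integrals against the approximating measures
  have hint : ∀ i R, Integrable (cutf (n := n) R) (ν i) := fun i R => by
    refine Integrable.mono' (integrable_const (1 : ℝ)) (cutf_cont R).aestronglyMeasurable (Eventually.of_forall fun v => ?_)
    rw [Real.norm_of_nonneg (cutf_nonneg R v)]; exact cutf_le_one R v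
  have hle1 : ∀ R, ∫ v, cutf R v ∂μ ≤ 1 := fun R => by
    refine le_of_tendsto' (hlim _ (cutf_cont R) (cutf_supp R)) fun i => ?_
    calc ∫ v, cutf R v ∂ν i ≤ ∫ v, (1 : ℝ) ∂ν i := integral_mono (hint i R) (integrable_const _) (cutf_le_one R)
      _ = 1 := by simp
  have hge : ∀ ε : ℝ, 0 < ε → ε < 1 → ∃ R0 : ℝ, ∀ R, R0 ≤ R → 1 - ε ≤ ∫ v, cutf R v ∂μ := by
    intro ε hε hε1
    obtain ⟨R, hR, H⟩ := ht ε hε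
    refine ⟨R + R ^ 2, fun R' hR' => ?_⟩
    refine ge_of_tendsto' (hlim _ (cutf_cont R') (cutf_supp R')) fun i => ?_
    have h1 : (ν i).real {v | Hnorm v < R} ≤ ∫ v, cutf R' v ∂ν i := by
      rw [← integral_indicator_one (Hset_lt R)]
      refine integral_mono ((integrable_const (1 : ℝ)).indicator (Hset_lt R)) (hint i R') fun v => ?_
      by_cases hv : Hnorm v < R
      · rw [Set.indicator_of_mem (show v ∈ {v : Hn n | Hnorm v < R} from hv),
          cutf_eq_one R' v ((norm_le_of_Hnorm hR v hv).trans hR')]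
        simp
      · rw [Set.indicator_of_notMem (show v ∉ {v : Hn n | Hnorm v < R} from hv)]
        exact cutf_nonneg R' v
    refine le_trans ?_ h1
    have h2 := ENNReal.toReal_mono (measure_ne_top _ _) (H i)
    rw [← ENNReal.ofReal_one, ← ENNReal.ofReal_sub _ hε.le, ENNReal.toReal_ofReal (by linarith)] at h2
    exact h2
  obtain ⟨R0, hR0⟩ := hge (1 / 2) (by norm_num) (by norm_num)
  have hintμ : ∀ R, R0 ≤ R → Integrable (cutf (n := n) R) μ := by
    intro R hR
    by_contra hc
    have := hR0 R hR
    rw [integral_undef hc] at this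
    norm_num at this
  have hlint : ∀ R, R0 ≤ R → ∫⁻ v, ENNReal.ofReal (cutf R v) ∂μ = ENNReal.ofReal (∫ v, cutf R v ∂μ) := fun R hR =>
    (ofReal_integral_eq_lintegral_ofReal (hintμ R hR) (Eventually.of_forall (cutf_nonneg R))).symm
  have hmct : Tendsto (fun k : ℕ => ∫⁻ v, ENNReal.ofReal (cutf (R0 + k) v) ∂μ) atTop (nhds (∫⁻ _ : Hn n, 1 ∂μ)) := by
    refine lintegral_tendsto_of_tendsto_of_monotone (fun k => (cutf_cont _).measurable.ennreal_ofReal.aemeasurable) ?_ ?_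
    · refine Eventually.of_forall fun v i j hij => ENNReal.ofReal_le_ofReal (cutf_mono ?_ v)
      have : (i : ℝ) ≤ j := by exact_mod_cast hij
      linarith
    · refine Eventually.of_forall fun v => ?_
      obtain ⟨K, hK⟩ := exists_nat_ge (‖v‖ - R0)
      refine tendsto_const_nhds.congr' ?_
      filter_upwards [eventually_ge_atTop K] with k hk
      have : (K : ℝ) ≤ k := by exact_mod_cast hk
      rw [cutf_eq_one _ _ (by linarith), ENNReal.ofReal_one]
  have hone : Tendsto (fun k : ℕ => ∫⁻ v, ENNReal.ofReal (cutf (R0 + k) v) ∂μ) atTop (nhds 1) := by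
    have : Tendsto (fun k : ℕ => ∫ v, cutf (R0 + k) v ∂μ) atTop (nhds 1) := by
      rw [Metric.tendsto_atTop]
      intro ε hε
      obtain ⟨R1, hR1⟩ := hge (min (ε / 2) (1 / 2)) (by positivity) ((min_le_right _ _).trans_lt (by norm_num))
      obtain ⟨K, hK⟩ := exists_nat_ge (R1 - R0)
      refine ⟨K, fun k hk => ?_⟩
      have : (K : ℝ) ≤ k := by exact_mod_cast hk
      have h1 := hR1 (R0 + k) (by linarith)
      have h2 := hle1 (R0 + k)
      have h3 : min (ε / 2) (1 / 2) ≤ ε / 2 := min_le_left _ _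
      rw [Real.dist_eq, abs_lt]
      constructor <;> linarith
    have h := (ENNReal.continuous_ofReal.tendsto _).comp this
    rw [ENNReal.ofReal_one] at h
    refine h.congr fun k => ?_
    exact (hlint _ (by linarith [Nat.cast_nonneg (α := ℝ) k])).symm
  have := tendsto_nhds_unique hmct hone
  simpa using this

lemma tight_finite {n : ℕ} (ν : Measure (Hn n)) (hν : ν Set.univ = 1) (ε : ℝ) (hε : 0 < ε) :
    ∃ R : ℝ, 0 < R ∧ 1 - ENNReal.ofReal ε ≤ ν {v | Hnorm v < R} := by
  have hm : Monotone fun k : ℕ => {v : Hn n | Hnorm v < (k : ℝ)} := by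
    intro i j hij v (hv : Hnorm v < i)
    have : (i : ℝ) ≤ j := by exact_mod_cast hij
    exact lt_of_lt_of_le hv this
  have h := tendsto_measure_iUnion_atTop (μ := ν) hm
  have hU : ⋃ k : ℕ, {v : Hn n | Hnorm v < (k : ℝ)} = Set.univ := by
    ext v
    simp only [Set.mem_iUnion, Set.mem_univ, iff_true]
    exact exists_nat_gt (Hnorm v)
  rw [hU, hν] at h
  have hlt : 1 - ENNReal.ofReal ε < 1 := ENNReal.sub_lt_self ENNReal.one_ne_top one_ne_zero (by simpa using hε)
  obtain ⟨k, hk, hk1⟩ := ((h.eventually_const_lt hlt).and (eventually_ge_atTop 1)).exists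
  exact ⟨k, by exact_mod_cast hk1, hk.le⟩

/-- **Compactness for a normalized maximizing sequence of the horizontal-weight Stein–Weiss
inequality** (Lemma 3.2): the compactness alternative holds for `μ_i = |g_i|^p|z'|^{βp} dv`,
and any weak-* limit `μ` of a subsequence has total mass `1`. -/
theorem maximizing_sequence_compactness_horizontal
    (n : ℕ) (hn : 1 ≤ n) (Q p p' q q' lam α β : ℝ) (hQ : Q = 2 * n + 2)
    (hp : 1 < p) (hq' : 1 < q')
    (hq : 1 / q + 1 / q' = 1) (hp' : 1 / p + 1 / p' = 1)
    (hlam0 : 0 < lam) (hlamQ : lam < Q)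
    (hab : 0 ≤ α + β) (habQ : lam + α + β ≤ Q)
    (hβ : β < 2 * n / p') (hα : α < 2 * n / q)
    (hbal : 1 / p + 1 / q' + (lam + α + β) / Q = 2)
    (hpq : p < q)
    (g : ℕ → Hn n → ℝ)
    (hmeas : ∀ i, Measurable (g i)) (hpos : ∀ i v, 0 ≤ g i v)
    (hnorm : ∀ i, eLpNorm (fun v => g i v * znorm v.1 ^ β) (ENNReal.ofReal p) volume = 1)
    (hmax : Tendsto
      (fun i => eLpNorm (fun u => Ilam lam (g i) u * znorm u.1 ^ (-α))
        (ENNReal.ofReal q) volume) atTop (nhds (SWbestConstHorizontal n p q lam α β)))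
    (hhalf : ∀ i, muWDz p β (g i) (Hball (0 : Hn n) 1) = 1 / 2)
    (hsup : ∀ i, muWDz p β (g i) (Hball (0 : Hn n) 1) =
      ⨆ t : ℝ, muWDz p β (g i) (Hball ((0 : Fin n → ℂ), t) 1)) :
    (∃ v : ℕ → Hn n, ∀ ε : ℝ, 0 < ε → ∃ R : ℝ, 0 < R ∧
      ∀ i, 1 - ENNReal.ofReal ε ≤ muWDz p β (g i) (Hball (v i) R)) ∧
    (∀ φ : ℕ → ℕ, StrictMono φ → ∀ μ : Measure (Hn n),
      (∀ f : Hn n → ℝ, Continuous f → HasCompactSupport f →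
        Tendsto (fun i => ∫ u, f u ∂ muWDz p β (g (φ i))) atTop (nhds (∫ u, f u ∂ μ))) →
      μ Set.univ = 1) := by
  have hq0 : 0 < q := by linarith
  have hp00 : 0 < p := by linarith
  have hp'0 : 0 < p' := by
    have h1 : 1 / p < 1 := by rw [div_lt_one hp00]; exact hp
    have : 0 < 1 / p' := by linarith
    exact one_div_pos.1 this
  have hQ0 : 0 < Q := by rw [hQ]; positivity
  have hbal2 : lam + α + β = (2 * n + 2) * (1 / q + 1 / p') := by
    have h1 : (lam + α + β) / Q = 1 / q + 1 / p' := by linarith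
    rw [div_eq_iff hQ0.ne'] at h1
    rw [h1, hQ]; ring
  obtain ⟨D, hD, hSW⟩ := SW_bound n hn p p' q q' lam α β hp hq' hq hp' hq0 hp'0 hab hβ hα hbal2 hpq
  have hSW' : ∀ g : Hn n → ℝ, Measurable g → (∀ v, 0 ≤ g v) →
      ∫⁻ v, ENNReal.ofReal ((g v * znorm v.1 ^ β) ^ p) = 1 →
      eLpNorm (fun u => Ilam lam g u * znorm u.1 ^ (-α)) (ENNReal.ofReal q) volume = NN q lam α g ∧
      NN q lam α g ≤ ENNReal.ofReal D ^ (1 / q) := by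
    intro g hg hg0 hgP
    have h := hSW g hg hg0 hgP.le
    refine ⟨eLp_N hn q lam α hq0 g hg hg0 (ne_top_of_le_ne_top ENNReal.ofReal_ne_top h), ?_⟩
    exact ENNReal.rpow_le_rpow h (by positivity)
  have hPiff : ∀ g : Hn n → ℝ, (∀ v, 0 ≤ g v) →
      (eLpNorm (fun v => g v * znorm v.1 ^ β) (ENNReal.ofReal p) volume = 1 ↔
        ∫⁻ v, ENNReal.ofReal ((g v * znorm v.1 ^ β) ^ p) = 1) := by
    intro g hg0
    rw [eLp_P p β hp00 g hg0]
    constructor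
    · intro h
      have h2 := congrArg (fun x : ℝ≥0∞ => x ^ p) h
      simpa only [← ENNReal.rpow_mul, one_div_mul_cancel hp00.ne', ENNReal.rpow_one, ENNReal.one_rpow] using h2
    · intro h; rw [h, ENNReal.one_rpow]
  set C := SWbestConstHorizontal n p q lam α β with hCd
  have hC : ∀ g : Hn n → ℝ, Measurable g → (∀ v, 0 ≤ g v) →
      ∫⁻ v, ENNReal.ofReal ((g v * znorm v.1 ^ β) ^ p) = 1 → NN q lam α g ≤ C := by
    intro g hg hg0 hgP
    rw [← (hSW' g hg hg0 hgP).1, hCd]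
    exact le_sSup ⟨g, hg, hg0, (hPiff g hg0).2 hgP, rfl⟩
  have hCt : C ≠ ∞ := by
    refine ne_top_of_le_ne_top (b := ENNReal.ofReal D ^ (1 / q))
      (ENNReal.rpow_ne_top_of_nonneg (by positivity) ENNReal.ofReal_ne_top) ?_
    rw [hCd]
    refine sSup_le ?_
    rintro c ⟨g, hg, hg0, hgn, rfl⟩
    have h := hSW' g hg hg0 ((hPiff g hg0).1 hgn)
    rw [h.1]; exact h.2
  have hP1 : ∀ i, ∫⁻ v, ENNReal.ofReal ((g i v * znorm v.1 ^ β) ^ p) = 1 := fun i => (hPiff _ (hpos i)).1 (hnorm i)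
  have hC0 : C ≠ 0 := by
    intro h
    have h1 := hC (g 0) (hmeas 0) (hpos 0) (hP1 0)
    rw [h] at h1
    exact NN_pos hn p q lam α β hp00 hq0 (g 0) (hmeas 0) (hpos 0) (hP1 0) (le_antisymm h1 zero_le)
  have hmass : ∀ i, muWDz p β (g i) Set.univ = 1 := fun i => by rw [← mu_univ p β (g i) (hpos i), hP1 i]
  have hmax2 : Tendsto (fun i => NN q lam α (g i)) atTop (nhds C) := by
    refine hmax.congr fun i => ?_
    exact (hSW' (g i) (hmeas i) (hpos i) (hP1 i)).1
  have tight : ∀ ε : ℝ, 0 < ε → ∃ R : ℝ, 0 < R ∧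
      ∀ i, 1 - ENNReal.ofReal ε ≤ muWDz p β (g i) {v | Hnorm v < R} := by
    intro ε0 hε0
    set ε := min ε0 (1 / 2) with hεd
    have hε : 0 < ε := lt_min hε0 (by norm_num)
    have hle : 1 - ENNReal.ofReal ε0 ≤ 1 - ENNReal.ofReal ε :=
      tsub_le_tsub_left (ENNReal.ofReal_le_ofReal (min_le_left _ _)) _
    obtain ⟨R, hR, c, hc, H⟩ := conc n hn p p' q lam α β hp hp' hp'0 hlam0 hβ hα hbal2 hpq C hC0 hCt hC ε hε (min_le_right _ _)
    obtain ⟨i0, hi0⟩ := eventually_atTop.1 (hmax2.eventually_const_lt hc)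
    choose S hS0 hS using fun i => tight_finite (muWDz p β (g i)) (hmass i) ε hε
    have hsum : ∀ i < i0, S i ≤ ∑ j ∈ Finset.range i0, S j := fun i hi =>
      Finset.single_le_sum (f := S) (fun j _ => (hS0 j).le) (Finset.mem_range.2 hi)
    have hsum0 : 0 ≤ ∑ j ∈ Finset.range i0, S j := Finset.sum_nonneg fun j _ => (hS0 j).le
    refine ⟨R + ∑ j ∈ Finset.range i0, S j, by linarith, fun i => hle.trans ?_⟩
    have hmon : ∀ R' : ℝ, R' ≤ R + ∑ j ∈ Finset.range i0, S j →
        muWDz p β (g i) {v | Hnorm v < R'} ≤ muWDz p β (g i) {v | Hnorm v < R + ∑ j ∈ Finset.range i0, S j} :=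
      fun R' hR' => measure_mono fun v (hv : Hnorm v < R') => lt_of_lt_of_le hv hR'
    by_cases hi : i < i0
    · exact (hS i).trans (hmon _ (by linarith [hsum i hi]))
    · refine le_trans ?_ (hmon R (by linarith))
      by_contra hcon
      have h := H (g i) (hmeas i) (hpos i) (hP1 i) (by rw [← Hball_zero, hhalf i]) (not_le.1 hcon)
      exact absurd (hi0 i (not_lt.1 hi)) (not_lt.2 h)
  refine ⟨⟨fun _ => 0, fun ε hε => ?_⟩, fun φ _ μ hlim => ?_⟩
  · obtain ⟨R, hR, H⟩ := tight ε hε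
    exact ⟨R, hR, fun i => by rw [Hball_zero]; exact H i⟩
  · refine weak_limit (fun i => muWDz p β (g (φ i))) (fun i => hmass _) ?_ μ hlim
    intro ε hε
    obtain ⟨R, hR, H⟩ := tight ε hε
    exact ⟨R, hR, fun i => H _⟩
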